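/- The function R ↦ λ₁(Γ_R) is strictly increasing on (0,∞): for 0 < R < R' one has λ₁(Γ_R) < λ₁(Γ_{R'}). -/

import Mathlib

/-!
Suppose `λ₁(Γ_L) ≤ λ₁(Γ_R)` for some `0 < R < L`, and let `u n` be a nonnegative normalized
minimizing sequence for `λ₁(Γ_L)`. An explicit trial function shows `λ₁(Γ_L) < π²`, whereas by
the Dirichlet conditions on both walls every unit of mass in `Γ_L ∖ Γ_R` costs energy at least
`π²`; hence all the mass concentrates in `Γ_R`.

No minimizer is constructed. Instead, take `φ = g(x₁) g(x₂)` admissible on `Γ_L`, satisfying the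
Neumann condition, with `-Δφ - λ₁(Γ_L) φ > 0` almost everywhere on `Γ_R`. Since `u n` minimizes,
`∫ ∇u·∇φ - λ₁(Γ_L) u φ → 0`, so by Green's formula and the loss of mass outside `Γ_R` the integral
of `(-Δφ - λ₁(Γ_L) φ) u` over `Γ_R` tends to `0`. Together with a uniform `L⁴` bound this forces the
mass of `u n` in `Γ_R` to vanish, a contradiction.
-/

noncomputable section
open MeasureTheory Set Real

/-- The interval `I = (-1,0)`. -/
def II : Set ℝ := Set.Ioo (-1) 0

/-- The broken guide `Γ = {x ∈ ℝ² : -1 < min(x₁,x₂) < 0}`. -/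
def Gam : Set (ℝ × ℝ) := {p | -1 < min p.1 p.2 ∧ min p.1 p.2 < 0}

/-- The box `□_L = {x : max(|x₁+1|,|x₂+1|) < L}`. -/
def Box (L : ℝ) : Set (ℝ × ℝ) := {p | |p.1 + 1| < L ∧ |p.2 + 1| < L}

/-- The finite guide `Γ_R = Γ ∩ □_{R+1}`. -/
def GamR (R : ℝ) : Set (ℝ × ℝ) := Gam ∩ Box (R + 1)

/-- The Neumann part `Σ_R = ∂Γ_R ∩ ∂□_{R+1}` of the boundary. -/
def Sig (R : ℝ) : Set (ℝ × ℝ) := frontier (GamR R) ∩ frontier (Box (R + 1))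

/-- The Dirichlet part `∂Γ_R ∖ Σ_R` of the boundary. -/
def DirB (R : ℝ) : Set (ℝ × ℝ) := frontier (GamR R) \ Sig R

/-- Squared gradient `|∇u|² = (∂₁u)² + (∂₂u)²`. -/
def gradSq2 (u : ℝ × ℝ → ℝ) (p : ℝ × ℝ) : ℝ :=
  (fderiv ℝ u p (1, 0)) ^ 2 + (fderiv ℝ u p (0, 1)) ^ 2

/-- Admissible functions for the mixed problem on `Γ_R`: `C¹` up to the boundary
(modelled by a globally `C¹` extension) vanishing on the Dirichlet part. -/
def AdmR (R : ℝ) (u : ℝ × ℝ → ℝ) : Prop :=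
  ContDiff ℝ 1 u ∧ ∀ p ∈ DirB R, u p = 0

/-- First Rayleigh quotient `λ₁(Γ_R)` of the mixed Dirichlet–Neumann Laplacian on `Γ_R`. -/
def lamR (R : ℝ) : ℝ :=
  sInf {r | ∃ u : ℝ × ℝ → ℝ, AdmR R u ∧ (∫ p in GamR R, (u p) ^ 2) ≠ 0 ∧
    r = (∫ p in GamR R, gradSq2 u p) / ∫ p in GamR R, (u p) ^ 2}

/-- First Rayleigh quotient `λ₁(Γ)` of the Dirichlet Laplacian on the broken guide `Γ`. -/
def lamG : ℝ :=
  sInf {r | ∃ u : ℝ × ℝ → ℝ, ContDiff ℝ 1 u ∧ HasCompactSupport u ∧ tsupport u ⊆ Gam ∧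
    (∫ p in Gam, (u p) ^ 2) ≠ 0 ∧
    r = (∫ p in Gam, gradSq2 u p) / ∫ p in Gam, (u p) ^ 2}

/-- `ω = √(π² − λ₁(Γ))`. -/
def omega : ℝ := Real.sqrt (π ^ 2 - lamG)

open Filter Topology

/-! ### Integral inequalities -/

lemma tendsto_zero_of_sq_le {ι : Type*} {l : Filter ι} {f g : ι → ℝ} (h : ∀ i, f i ^ 2 ≤ g i)
    (hg : Tendsto g l (𝓝 0)) : Tendsto f l (𝓝 0) :=
  squeeze_zero_norm (fun i => abs_le_sqrt (h i)) (by simpa using hg.sqrt)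

section Measure

variable {α : Type*} [MeasurableSpace α] {μ : Measure α}

lemma sq_integral_mul_le {f g : α → ℝ} (hf : MemLp f 2 μ) (hg : MemLp g 2 μ) :
    (∫ x, f x * g x ∂μ) ^ 2 ≤ (∫ x, f x ^ 2 ∂μ) * ∫ x, g x ^ 2 ∂μ := by
  have hfg : Integrable (fun x => f x * g x) μ := hf.integrable_mul hg
  have expand (t : ℝ) : ∫ x, (f x + t * g x) ^ 2 ∂μ =
      (∫ x, g x ^ 2 ∂μ) * (t * t) + (2 * ∫ x, f x * g x ∂μ) * t + ∫ x, f x ^ 2 ∂μ := by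
    have h (x : α) :
        (f x + t * g x) ^ 2 = t * t * g x ^ 2 + 2 * t * (f x * g x) + f x ^ 2 := by ring
    simp_rw [h]
    rw [integral_add (by exact (hg.integrable_sq.const_mul _).add (hfg.const_mul _))
      hf.integrable_sq, integral_add (hg.integrable_sq.const_mul _) (hfg.const_mul _),
      integral_const_mul, integral_const_mul]
    ring
  have h := discrim_le_zero fun t => (expand t).symm ▸ integral_nonneg fun x => sq_nonneg _
  rw [discrim] at h
  linarith

lemma exists_measureReal_lt_of_ae_pos [IsFiniteMeasure μ] {f : α → ℝ} (hf : Measurable f)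
    (hpos : ∀ᵐ x ∂μ, 0 < f x) {ε : ℝ} (hε : 0 < ε) : ∃ τ > 0, μ.real {x | f x < τ} < ε := by
  have h : Tendsto (μ ∘ fun τ => {x | f x < τ}) (𝓝[>] 0) (𝓝 (μ (⋂ τ > 0, {x | f x < τ}))) :=
    tendsto_measure_biInter_gt
      (fun τ _ => (measurableSet_lt hf measurable_const).nullMeasurableSet)
      (fun τ σ _ hτσ x hx => lt_of_lt_of_le hx hτσ) ⟨1, one_pos, measure_ne_top _ _⟩
  have h0 : μ (⋂ τ > 0, {x | f x < τ}) = 0 := by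
    refine measure_mono_null (fun x hx => ?_) (ae_iff.1 hpos)
    simp only [mem_iInter, mem_ofPred_eq] at hx
    exact fun hx0 => lt_irrefl _ (hx _ hx0)
  rw [h0] at h
  have hlt := h.eventually (gt_mem_nhds (ENNReal.ofReal_pos.2 hε))
  obtain ⟨τ, hτ, hτ0⟩ := (hlt.and self_mem_nhdsWithin).exists
  exact ⟨τ, hτ0, (ENNReal.lt_ofReal_iff_toReal_lt (measure_ne_top _ _)).1 hτ⟩

/-- If `a ≥ τ`, the term `a * s` dominates `s ^ 2` unless `s` is so large that `s ^ 4` does. -/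
lemma sq_le_pow_four_add_mul_add_ite {δ τ a s : ℝ} (hδ : 0 < δ) (hτ : 0 < τ) (ha : 0 ≤ a)
    (hs : 0 ≤ s) :
    s ^ 2 ≤ δ * s ^ 4 + (1 + 1 / δ) / τ * (a * s) + if a < τ then 1 / δ else 0 := by
  have hδδ : δ * (1 / δ) = 1 := by field_simp
  split_ifs with haτ
  · have hsq : 0 ≤ (δ * s ^ 2 - 1) ^ 2 / δ := by positivity
    have hexpand : (δ * s ^ 2 - 1) ^ 2 / δ = δ * s ^ 4 - 2 * s ^ 2 + 1 / δ := by field_simp; ring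
    have : 0 ≤ (1 + 1 / δ) / τ * (a * s) := by positivity
    nlinarith [sq_nonneg s]
  · have hweight : (1 + 1 / δ) * s ≤ (1 + 1 / δ) / τ * (a * s) := by
      rw [div_mul_eq_mul_div, le_div_iff₀ hτ, mul_assoc]
      have := mul_le_mul_of_nonneg_right (not_lt.1 haτ) hs
      exact mul_le_mul_of_nonneg_left (by linarith) (by positivity)
    rcases le_total s (1 + 1 / δ) with hle | hge
    · nlinarith [mul_nonneg hδ.le (pow_nonneg hs 4)]
    · have : 1 ≤ δ * s ^ 2 := by nlinarith [one_div_pos.2 hδ]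
      have : s ^ 2 ≤ δ * s ^ 4 := by nlinarith [sq_nonneg s]
      nlinarith [mul_nonneg (by positivity : 0 ≤ 1 + 1 / δ) hs]

lemma exists_integral_sq_le [IsFiniteMeasure μ] {f : α → ℝ} (hf : Measurable f)
    (hpos : ∀ᵐ x ∂μ, 0 < f x) {δ : ℝ} (hδ : 0 < δ) :
    ∃ C, ∀ u : α → ℝ, (∀ x, 0 ≤ u x) → Integrable (fun x => u x ^ 2) μ →
      Integrable (fun x => u x ^ 4) μ → Integrable (fun x => f x * u x) μ →
      ∫ x, u x ^ 2 ∂μ ≤ δ * (∫ x, u x ^ 4 ∂μ) + C * (∫ x, f x * u x ∂μ) + δ := by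
  obtain ⟨τ, hτ, hsmall⟩ := exists_measureReal_lt_of_ae_pos hf hpos (mul_pos hδ hδ)
  have hs : MeasurableSet {x | f x < τ} := measurableSet_lt hf measurable_const
  refine ⟨(1 + 1 / δ) / τ, fun u hu h2 h4 hfu => ?_⟩
  have hi : Integrable ({x | f x < τ}.indicator fun _ => 1 / δ) μ :=
    (integrable_const _).indicator hs
  have hint : ∫ x, u x ^ 2 ∂μ ≤ ∫ x, (δ * u x ^ 4 + (1 + 1 / δ) / τ * (f x * u x) +
      {x | f x < τ}.indicator (fun _ => 1 / δ) x) ∂μ := by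
    refine integral_mono_ae h2 (((h4.const_mul δ).add (hfu.const_mul _)).add hi) ?_
    filter_upwards [hpos] with x hx
    simpa only [indicator_apply, mem_ofPred_eq]
      using sq_le_pow_four_add_mul_add_ite hδ hτ hx.le (hu x)
  have hind : ∫ x, {x | f x < τ}.indicator (fun _ => 1 / δ) x ∂μ ≤ δ := by
    rw [integral_indicator_const _ hs, smul_eq_mul, ← div_eq_mul_one_div, div_le_iff₀ hδ]
    exact hsmall.le
  rw [integral_add (by exact (h4.const_mul δ).add (hfu.const_mul _)) hi,
    integral_add (h4.const_mul δ) (hfu.const_mul _), integral_const_mul,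
    integral_const_mul] at hint
  linarith

lemma tendsto_integral_sq_zero [IsFiniteMeasure μ] {f : α → ℝ} (hf : Measurable f)
    (hpos : ∀ᵐ x ∂μ, 0 < f x) {u : ℕ → α → ℝ} (hu : ∀ n x, 0 ≤ u n x)
    (h2 : ∀ n, Integrable (fun x => u n x ^ 2) μ) (h4 : ∀ n, Integrable (fun x => u n x ^ 4) μ)
    (hfu : ∀ n, Integrable (fun x => f x * u n x) μ) {K : ℝ}
    (hK : ∀ᶠ n in atTop, ∫ x, u n x ^ 4 ∂μ ≤ K)
    (hlim : Tendsto (fun n => ∫ x, f x * u n x ∂μ) atTop (𝓝 0)) :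
    Tendsto (fun n => ∫ x, u n x ^ 2 ∂μ) atTop (𝓝 0) := by
  have hnonneg (n : ℕ) : 0 ≤ ∫ x, u n x ^ 2 ∂μ := integral_nonneg fun x => sq_nonneg _
  refine tendsto_order.2 ⟨fun a ha => .of_forall fun n => ha.trans_le (hnonneg n), fun ε hε => ?_⟩
  have hK' : 0 < |K| + 3 := by positivity
  obtain ⟨C, hC⟩ := exists_integral_sq_le hf hpos (div_pos hε hK')
  have hlimC : Tendsto (fun n => C * ∫ x, f x * u n x ∂μ) atTop (𝓝 0) := by
    simpa using hlim.const_mul C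
  filter_upwards [hK, hlimC.eventually (gt_mem_nhds (div_pos hε hK'))] with n hKn hsmall
  have hbound := hC (u n) (hu n) (h2 n) (h4 n) (hfu n)
  have hδK : ε / (|K| + 3) * ∫ x, u n x ^ 4 ∂μ ≤ ε / (|K| + 3) * |K| := by
    gcongr
    exact hKn.trans (le_abs_self K)
  have hsum : ε / (|K| + 3) * |K| + 3 * (ε / (|K| + 3)) = ε := by field_simp
  linarith [div_pos hε hK']

end Measure

section Interval

variable {a b : ℝ} {w w' : ℝ → ℝ}

/-- Integrate `(w' - w * T) ^ 2 ≥ 0` and complete `2 * w * w' * T + w ^ 2 * T'` to the derivative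
of `w ^ 2 * T`. -/
lemma integral_mul_sq_le_of_riccati {T V : ℝ → ℝ} (hab : a ≤ b)
    (hw : ∀ t ∈ Icc a b, HasDerivAt w (w' t) t) (hw' : ContinuousOn w' (Icc a b))
    (ha : w a = 0) (hb : w b = 0) (hV : ContinuousOn V (Icc a b))
    (hT : ∀ t ∈ Icc a b, HasDerivAt T (-V t - T t ^ 2) t) :
    ∫ t in a..b, V t * w t ^ 2 ≤ ∫ t in a..b, w' t ^ 2 := by
  have hwc : ContinuousOn w (Icc a b) := fun t ht => (hw t ht).continuousAt.continuousWithinAt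
  have hTc : ContinuousOn T (Icc a b) := fun t ht => (hT t ht).continuousAt.continuousWithinAt
  rw [← uIcc_of_le hab] at hw hw' hV hT hwc hTc
  have hderiv (t : ℝ) (ht : t ∈ uIcc a b) : HasDerivAt (fun t => w t ^ 2 * T t)
      (2 * w t * w' t * T t + w t ^ 2 * (-V t - T t ^ 2)) t :=
    (((hw t ht).pow 2).mul (hT t ht)).congr_deriv (by simp)
  have hint := intervalIntegral.integral_eq_sub_of_hasDerivAt hderiv
    (ContinuousOn.intervalIntegrable (by fun_prop))
  have hmono : ∫ t in a..b, (2 * w t * w' t * T t + w t ^ 2 * (-V t - T t ^ 2)) ≤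
      ∫ t in a..b, (w' t ^ 2 - V t * w t ^ 2) :=
    intervalIntegral.integral_mono_on hab (ContinuousOn.intervalIntegrable (by fun_prop))
      (ContinuousOn.intervalIntegrable (by fun_prop))
      fun t _ => by nlinarith [sq_nonneg (w' t - w t * T t)]
  rw [hint, intervalIntegral.integral_sub (ContinuousOn.intervalIntegrable (by fun_prop))
    (ContinuousOn.intervalIntegrable (by fun_prop)), ha, hb] at hmono
  linarith

lemma hasDerivAt_neg_mul_tan {θ m t : ℝ} (h : cos (θ * (t - m)) ≠ 0) :
    HasDerivAt (fun t => -θ * tan (θ * (t - m)))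
      (-θ ^ 2 - (-θ * tan (θ * (t - m))) ^ 2) t := by
  have hlin : HasDerivAt (fun t => θ * (t - m)) θ t := by
    simpa using ((hasDerivAt_id t).sub_const m).const_mul θ
  refine (((hasDerivAt_tan h).comp t hlin).const_mul (-θ)).congr_deriv ?_
  rw [← inv_eq_one_div, ← inv_one_add_tan_sq h, inv_inv]
  ring

/-- The sharp Poincaré inequality for Dirichlet conditions: compare with the positive solution
`cos (θ * (t - (a + b) / 2))` of `v'' = -θ ^ 2 * v` and let `θ` increase to `π / (b - a)`. -/
lemma sq_pi_div_mul_integral_sq_le (hab : a < b)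
    (hw : ∀ t ∈ Icc a b, HasDerivAt w (w' t) t) (hw' : ContinuousOn w' (Icc a b))
    (ha : w a = 0) (hb : w b = 0) :
    (π / (b - a)) ^ 2 * ∫ t in a..b, w t ^ 2 ≤ ∫ t in a..b, w' t ^ 2 := by
  have hlim : Tendsto (fun θ : ℝ => θ ^ 2 * ∫ t in a..b, w t ^ 2) (𝓝[<] (π / (b - a)))
      (𝓝 ((π / (b - a)) ^ 2 * ∫ t in a..b, w t ^ 2)) :=
    (Continuous.tendsto (by fun_prop) _).mono_left nhdsWithin_le_nhds
  refine le_of_tendsto hlim ?_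
  filter_upwards [Ioo_mem_nhdsLT (div_pos pi_pos (sub_pos.2 hab))] with θ ⟨hθ0, hθ⟩
  rw [← intervalIntegral.integral_const_mul]
  refine integral_mul_sq_le_of_riccati hab.le hw hw' ha hb continuousOn_const
    fun t ht => hasDerivAt_neg_mul_tan (m := (a + b) / 2) (cos_pos_of_mem_Ioo ?_).ne'
  rw [lt_div_iff₀ (sub_pos.2 hab)] at hθ
  constructor <;> nlinarith [ht.1, ht.2]

lemma sq_le_mul_integral_deriv_sq {x : ℝ} (hw : ∀ t ∈ Icc a b, HasDerivAt w (w' t) t)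
    (hw' : ContinuousOn w' (Icc a b)) (ha : w a = 0) (hx : x ∈ Icc a b) :
    w x ^ 2 ≤ (b - a) * ∫ t in a..b, w' t ^ 2 := by
  have hsub : Icc a x ⊆ Icc a b := Icc_subset_Icc_right hx.2
  have hsq (c d : ℝ) (h : Icc c d ⊆ Icc a b) (hcd : c ≤ d) :
      IntervalIntegrable (fun t => w' t ^ 2) volume c d :=
    ContinuousOn.intervalIntegrable (by rw [uIcc_of_le hcd]; exact (hw'.mono h).pow 2)
  have hcs : (∫ t in a..x, w' t) ^ 2 ≤ (x - a) * ∫ t in a..x, w' t ^ 2 := by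
    have hL2 : MemLp w' 2 (volume.restrict (Ioc a x)) :=
      (memLp_two_iff_integrable_sq ((hw'.mono (Ioc_subset_Icc_self.trans
        hsub)).aestronglyMeasurable measurableSet_Ioc)).2
        ((intervalIntegrable_iff_integrableOn_Ioc_of_le hx.1).1 (hsq a x hsub hx.1))
    have h := sq_integral_mul_le (memLp_const (1 : ℝ)) hL2
    simpa [intervalIntegral.integral_of_le hx.1, hx.1] using h
  rw [intervalIntegral.integral_eq_sub_of_hasDerivAt
    (fun t ht => hw t (hsub (by rwa [uIcc_of_le hx.1] at ht)))
    (ContinuousOn.intervalIntegrable (by rw [uIcc_of_le hx.1]; exact hw'.mono hsub)),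
    ha, sub_zero] at hcs
  have hnonneg : 0 ≤ ∫ t in a..x, w' t ^ 2 :=
    intervalIntegral.integral_nonneg hx.1 fun t _ => sq_nonneg _
  refine hcs.trans (mul_le_mul (by linarith [hx.2]) ?_ hnonneg (by linarith [hx.1, hx.2]))
  exact intervalIntegral.integral_mono_interval le_rfl hx.1 hx.2
    (Eventually.of_forall fun t => sq_nonneg _) (hsq a b subset_rfl (hx.1.trans hx.2))

end Interval

/-! ### Functions of one variable -/

lemma contDiff_one_of_hasDerivAt {f f' : ℝ → ℝ} (hf : ∀ x, HasDerivAt f (f' x) x)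
    (hf' : Continuous f') : ContDiff ℝ 1 f :=
  contDiff_one_iff_deriv.2 ⟨fun x => (hf x).differentiableAt, by
    rwa [show deriv f = f' from funext fun x => (hf x).deriv]⟩

lemma hasDerivAt_ite_le {f g f' g' : ℝ → ℝ} {a : ℝ} (hf : ∀ x ≤ a, HasDerivAt f (f' x) x)
    (hg : ∀ x ≥ a, HasDerivAt g (g' x) x) (h : f a = g a) (h' : f' a = g' a) (x : ℝ) :
    HasDerivAt (fun x => if x ≤ a then f x else g x) (if x ≤ a then f' x else g' x) x := by
  rcases lt_trichotomy x a with hx | rfl | hx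
  · rw [if_pos hx.le]
    refine (hf x hx.le).congr_of_eventuallyEq ?_
    filter_upwards [Iio_mem_nhds hx] with y hy using if_pos (le_of_lt hy)
  · rw [if_pos le_rfl, ← hasDerivWithinAt_univ, ← Iic_union_Ici (a := x)]
    refine .union ((hf x le_rfl).hasDerivWithinAt.congr (fun y hy => if_pos hy) (if_pos le_rfl))
      ((h' ▸ (hg x le_rfl).hasDerivWithinAt).congr (fun y hy => ?_) ((if_pos le_rfl).trans h))
    rcases eq_or_lt_of_le (mem_Ici.1 hy) with rfl | hlt
    · exact (if_pos le_rfl).trans h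
    · exact if_neg hlt.not_ge
  · rw [if_neg hx.not_ge]
    refine (hg x hx.le).congr_of_eventuallyEq ?_
    filter_upwards [Ioi_mem_nhds hx] with y hy using if_neg (not_le.2 hy)

lemma hasDerivAt_max_zero_pow (n : ℕ) (x : ℝ) :
    HasDerivAt (fun x => max x 0 ^ (n + 2)) ((n + 2) * max x 0 ^ (n + 1)) x := by
  have h := hasDerivAt_ite_le (a := 0) (fun x _ => hasDerivAt_const x (0 : ℝ))
    (fun x _ => hasDerivAt_pow (n + 2) x) (by simp) (by simp) x
  convert h using 1
  · ext y
    split_ifs with hy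
    · simp [max_eq_right hy]
    · rw [max_eq_left (not_le.1 hy).le]
  · split_ifs with hx
    · simp [max_eq_right hx]
    · rw [max_eq_left (not_le.1 hx).le]
      norm_num

/-- A soft absolute value: it is `C¹`, vanishes at the origin and tends to `|s|` as `η → 0`. -/
def softAbs (η s : ℝ) : ℝ := √(s ^ 2 + η ^ 2) - η

section softAbs

variable {η : ℝ}

lemma hasDerivAt_softAbs (hη : 0 < η) (s : ℝ) :
    HasDerivAt (softAbs η) (s / √(s ^ 2 + η ^ 2)) s := by
  have h : HasDerivAt (fun s : ℝ => s ^ 2 + η ^ 2) (2 * s) s := by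
    simpa using (hasDerivAt_pow 2 s).add_const (η ^ 2)
  refine ((h.sqrt (by positivity)).sub_const η).congr_deriv ?_
  rw [mul_div_mul_left _ _ two_ne_zero]

lemma contDiff_softAbs (hη : 0 < η) : ContDiff ℝ 1 (softAbs η) :=
  contDiff_one_of_hasDerivAt (hasDerivAt_softAbs hη)
    (continuous_id.div (by fun_prop) fun s => (by positivity : √(s ^ 2 + η ^ 2) ≠ 0))

lemma sq_deriv_softAbs_le_one (hη : 0 < η) (s : ℝ) : deriv (softAbs η) s ^ 2 ≤ 1 := by
  rw [(hasDerivAt_softAbs hη s).deriv, div_pow, sq_sqrt (by positivity),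
    div_le_one (by positivity)]
  linarith [sq_nonneg η]

lemma softAbs_zero (hη : 0 ≤ η) : softAbs η 0 = 0 := by
  simp [softAbs, sqrt_sq hη]

lemma deriv_softAbs_zero (hη : 0 < η) : deriv (softAbs η) 0 = 0 := by
  simp [(hasDerivAt_softAbs hη 0).deriv]

lemma softAbs_nonneg (η s : ℝ) : 0 ≤ softAbs η s :=
  sub_nonneg.2 (le_sqrt_of_sq_le (by linarith [sq_nonneg s]))

lemma softAbs_le_abs (hη : 0 ≤ η) (s : ℝ) : softAbs η s ≤ |s| := by
  rw [softAbs, sub_le_iff_le_add, sqrt_le_left (by positivity)]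
  nlinarith [sq_abs s, abs_nonneg s]

lemma abs_sub_le_softAbs (η s : ℝ) : |s| - η ≤ softAbs η s :=
  sub_le_sub_right (abs_le_sqrt (by linarith [sq_nonneg η])) η

lemma sq_sub_le_sq_softAbs (hη : 0 ≤ η) (s : ℝ) : s ^ 2 - 2 * η * |s| ≤ softAbs η s ^ 2 := by
  have hle := softAbs_le_abs hη s
  have hsq := sq_sqrt (by positivity : 0 ≤ s ^ 2 + η ^ 2)
  rw [softAbs] at hle ⊢
  nlinarith

end softAbs

lemma hasDerivAt_comp_min {f f' : ℝ → ℝ} {a : ℝ} (hf : ∀ x, HasDerivAt f (f' x) x)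
    (ha : f' a = 0) (x : ℝ) : HasDerivAt (fun x => f (min x a)) (f' (min x a)) x := by
  have h := hasDerivAt_ite_le (fun x _ => hf x) (fun x _ => hasDerivAt_const x (f a)) rfl ha x
  have hite {g : ℝ → ℝ} (y : ℝ) : g (min y a) = if y ≤ a then g y else g a := by
    split_ifs with hy
    · rw [min_eq_left hy]
    · rw [min_eq_right (not_le.1 hy).le]
  simp_rw [hite, ha]
  exact h

/-! ### Geometry of the guide -/

lemma mem_GamR {R : ℝ} {p : ℝ × ℝ} :
    p ∈ GamR R ↔ p.1 ∈ Ioo (-1) R ∧ p.2 ∈ Ioo (-1) R ∧ (p.1 < 0 ∨ p.2 < 0) := by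
  simp only [GamR, Gam, Box, mem_inter_iff, mem_ofPred_eq, lt_min_iff, min_lt_iff, abs_lt, mem_Ioo]
  grind

lemma isOpen_Box (L : ℝ) : IsOpen (Box L) :=
  (isOpen_lt (f := fun p : ℝ × ℝ => |p.1 + 1|) (by fun_prop) continuous_const).inter
    (isOpen_lt (f := fun p : ℝ × ℝ => |p.2 + 1|) (by fun_prop) continuous_const)

lemma isOpen_GamR (R : ℝ) : IsOpen (GamR R) :=
  (isOpen_Ioo.preimage (f := fun p : ℝ × ℝ => min p.1 p.2) (by fun_prop)).inter (isOpen_Box _)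

/-- Translation along the diagonal gives continuous sections. -/
lemma isOpenMap_min : IsOpenMap fun p : ℝ × ℝ => min p.1 p.2 := by
  refine IsOpenMap.of_sections fun p =>
    ⟨fun s => (p.1 + (s - min p.1 p.2), p.2 + (s - min p.1 p.2)), ?_, ?_, fun s => ?_⟩
  · exact Continuous.continuousAt (by fun_prop)
  · simp
  · simp [min_add_add_right]

lemma frontier_Gam : frontier Gam = {p | min p.1 p.2 = -1 ∨ min p.1 p.2 = 0} := by
  have h := isOpenMap_min.preimage_frontier_eq_frontier_preimage (by fun_prop) (Ioo (-1) 0)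
  rw [frontier_Ioo (by norm_num)] at h
  exact h.symm

lemma DirB_eq (R : ℝ) : DirB R = {p | min p.1 p.2 = -1 ∨ min p.1 p.2 = 0} ∩ Box (R + 1) := by
  have hlocal : frontier (GamR R) ∩ Box (R + 1) = frontier Gam ∩ Box (R + 1) :=
    frontier_inter_open_inter (isOpen_Box _)
  rw [← frontier_Gam, ← hlocal]
  ext p
  simp only [DirB, Sig, Set.mem_sdiff, mem_inter_iff, (isOpen_Box (R + 1)).frontier_eq, GamR]
  have hclosure (hp : p ∈ frontier (Gam ∩ Box (R + 1))) : p ∈ closure (Box (R + 1)) :=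
    closure_mono inter_subset_right (frontier_subset_closure hp)
  tauto

lemma mem_DirB {R : ℝ} {p : ℝ × ℝ} :
    p ∈ DirB R ↔ (min p.1 p.2 = -1 ∨ min p.1 p.2 = 0) ∧ |p.1 + 1| < R + 1 ∧ |p.2 + 1| < R + 1 := by
  rw [DirB_eq]
  rfl

lemma swap_mem_GamR {R : ℝ} {p : ℝ × ℝ} : p.swap ∈ GamR R ↔ p ∈ GamR R := by
  simp only [mem_GamR, Prod.fst_swap, Prod.snd_swap]
  tauto

lemma AdmR.mono {R L : ℝ} (h : R ≤ L) {u : ℝ × ℝ → ℝ} (hu : AdmR L u) : AdmR R u := by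
  refine ⟨hu.1, fun p hp => hu.2 p ?_⟩
  rw [mem_DirB] at hp ⊢
  exact ⟨hp.1, by linarith [hp.2.1], by linarith [hp.2.2]⟩

lemma AdmR.swap {R : ℝ} {u : ℝ × ℝ → ℝ} (hu : AdmR R u) : AdmR R (fun p => u p.swap) := by
  refine ⟨hu.1.comp (contDiff_snd.prodMk contDiff_fst), fun p hp => hu.2 _ ?_⟩
  rw [mem_DirB] at hp ⊢
  rw [Prod.fst_swap, Prod.snd_swap, min_comm]
  exact ⟨hp.1, hp.2.2, hp.2.1⟩

lemma AdmR.comp {R : ℝ} {u : ℝ × ℝ → ℝ} (hu : AdmR R u) {h : ℝ → ℝ} (hh : ContDiff ℝ 1 h)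
    (h0 : h 0 = 0) : AdmR R fun p => h (u p) :=
  ⟨hh.comp hu.1, fun p hp => (congrArg h (hu.2 p hp)).trans h0⟩

/-- Stated up to the Neumann end `x = R`, which is not part of `DirB R`. -/
lemma AdmR.eq_zero_of_snd_eq_neg_one {R : ℝ} {u : ℝ × ℝ → ℝ} (hu : AdmR R u) (hR : 0 < R) {x : ℝ}
    (hx : x ∈ Icc (-1) R) : u (x, -1) = 0 := by
  have hEq : EqOn (fun x => u (x, -1)) (fun _ => 0) (closure (Ioo (-1) R)) := by
    have hc := hu.1.continuous
    refine EqOn.closure (fun x hx => hu.2 _ (mem_DirB.2 ⟨.inl (min_eq_right hx.1.le), ?_, ?_⟩))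
      (by fun_prop) continuous_const
    · rw [abs_lt]
      constructor <;> linarith [hx.1, hx.2]
    · norm_num
      linarith
  rw [closure_Ioo (by linarith)] at hEq
  exact hEq hx

lemma AdmR.eq_zero_of_snd_eq_zero {R : ℝ} {u : ℝ × ℝ → ℝ} (hu : AdmR R u) (hR : 0 < R) {x : ℝ}
    (hx : x ∈ Icc 0 R) : u (x, 0) = 0 := by
  have hEq : EqOn (fun x => u (x, 0)) (fun _ => 0) (closure (Ioo 0 R)) := by
    have hc := hu.1.continuous
    refine EqOn.closure (fun x hx => hu.2 _ (mem_DirB.2 ⟨.inr (min_eq_right hx.1.le), ?_, ?_⟩))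
      (by fun_prop) continuous_const
    · rw [abs_lt]
      constructor <;> linarith [hx.1, hx.2]
    · norm_num
      exact hR
  rw [closure_Ioo hR.ne] at hEq
  exact hEq hx

/-! ### Partial derivatives -/

/-- The partial derivative `∂₁u`. -/
def derivFst (u : ℝ × ℝ → ℝ) (p : ℝ × ℝ) : ℝ := fderiv ℝ u p (1, 0)

/-- The partial derivative `∂₂u`. -/
def derivSnd (u : ℝ × ℝ → ℝ) (p : ℝ × ℝ) : ℝ := fderiv ℝ u p (0, 1)

section Partial

variable {u v : ℝ × ℝ → ℝ}

lemma gradSq2_eq (u : ℝ × ℝ → ℝ) (p : ℝ × ℝ) :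
    gradSq2 u p = derivFst u p ^ 2 + derivSnd u p ^ 2 := rfl

lemma gradSq2_nonneg (u : ℝ × ℝ → ℝ) (p : ℝ × ℝ) : 0 ≤ gradSq2 u p :=
  add_nonneg (sq_nonneg _) (sq_nonneg _)

lemma continuous_derivFst (hu : ContDiff ℝ 1 u) : Continuous (derivFst u) :=
  (hu.continuous_fderiv one_ne_zero).clm_apply continuous_const

lemma continuous_derivSnd (hu : ContDiff ℝ 1 u) : Continuous (derivSnd u) :=
  (hu.continuous_fderiv one_ne_zero).clm_apply continuous_const

lemma continuous_gradSq2 (hu : ContDiff ℝ 1 u) : Continuous (gradSq2 u) :=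
  ((continuous_derivFst hu).pow 2).add ((continuous_derivSnd hu).pow 2)

lemma hasDerivAt_derivFst (hu : Differentiable ℝ u) (x y : ℝ) :
    HasDerivAt (fun x => u (x, y)) (derivFst u (x, y)) x :=
  (hu (x, y)).hasFDerivAt.comp_hasDerivAt x ((hasDerivAt_id x).prodMk (hasDerivAt_const x y))

lemma hasDerivAt_derivSnd (hu : Differentiable ℝ u) (x y : ℝ) :
    HasDerivAt (fun y => u (x, y)) (derivSnd u (x, y)) y :=
  (hu (x, y)).hasFDerivAt.comp_hasDerivAt y ((hasDerivAt_const y x).prodMk (hasDerivAt_id y))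

lemma derivFst_swap (hu : Differentiable ℝ u) (p : ℝ × ℝ) :
    derivFst (fun q => u q.swap) p = derivSnd u p.swap :=
  (hasDerivAt_derivFst (hu.comp (differentiable_snd.prodMk differentiable_fst)) p.1 p.2).unique
    (hasDerivAt_derivSnd hu p.2 p.1)

lemma derivSnd_swap (hu : Differentiable ℝ u) (p : ℝ × ℝ) :
    derivSnd (fun q => u q.swap) p = derivFst u p.swap :=
  (hasDerivAt_derivSnd (hu.comp (differentiable_snd.prodMk differentiable_fst)) p.1 p.2).unique
    (hasDerivAt_derivFst hu p.2 p.1)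

lemma gradSq2_swap (hu : Differentiable ℝ u) (p : ℝ × ℝ) :
    gradSq2 (fun q => u q.swap) p = gradSq2 u p.swap := by
  rw [gradSq2_eq, gradSq2_eq, derivFst_swap hu, derivSnd_swap hu, add_comm]

lemma gradSq2_comp (hu : Differentiable ℝ u) {h : ℝ → ℝ} (hh : Differentiable ℝ h) (p : ℝ × ℝ) :
    gradSq2 (fun q => h (u q)) p = deriv h (u p) ^ 2 * gradSq2 u p := by
  have h1 : derivFst (fun q => h (u q)) p = deriv h (u p) * derivFst u p :=
    (hasDerivAt_derivFst (hh.comp hu) p.1 p.2).unique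
      ((hh _).hasDerivAt.comp p.1 (hasDerivAt_derivFst hu p.1 p.2))
  have h2 : derivSnd (fun q => h (u q)) p = deriv h (u p) * derivSnd u p :=
    (hasDerivAt_derivSnd (hh.comp hu) p.1 p.2).unique
      ((hh _).hasDerivAt.comp p.2 (hasDerivAt_derivSnd hu p.1 p.2))
  rw [gradSq2_eq, gradSq2_eq, h1, h2]
  ring

lemma derivFst_add_const_mul (hu : Differentiable ℝ u) (hv : Differentiable ℝ v) (t : ℝ)
    (p : ℝ × ℝ) : derivFst (fun q => u q + t * v q) p = derivFst u p + t * derivFst v p :=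
  (hasDerivAt_derivFst (hu.add (hv.const_mul t)) p.1 p.2).unique
    ((hasDerivAt_derivFst hu p.1 p.2).add ((hasDerivAt_derivFst hv p.1 p.2).const_mul t))

lemma derivSnd_add_const_mul (hu : Differentiable ℝ u) (hv : Differentiable ℝ v) (t : ℝ)
    (p : ℝ × ℝ) : derivSnd (fun q => u q + t * v q) p = derivSnd u p + t * derivSnd v p :=
  (hasDerivAt_derivSnd (hu.add (hv.const_mul t)) p.1 p.2).unique
    ((hasDerivAt_derivSnd hu p.1 p.2).add ((hasDerivAt_derivSnd hv p.1 p.2).const_mul t))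

end Partial

/-! ### Integration over the guide -/

/-- The rectangle cut out of the horizontal arm of the guide by `a ≤ x₁ < b`. -/
def arm (a b : ℝ) : Set (ℝ × ℝ) := Ico a b ×ˢ Ioo (-1) 0

lemma measurableSet_arm (a b : ℝ) : MeasurableSet (arm a b) :=
  measurableSet_Ico.prod measurableSet_Ioo

section Fubini

variable {R L : ℝ} {F : ℝ × ℝ → ℝ}

lemma GamR_eq_prod_union_arm (hR : 0 ≤ R) :
    GamR R = Ioo (-1) 0 ×ˢ Ioo (-1) R ∪ arm 0 R := by
  ext p
  simp only [mem_GamR, arm, mem_union, mem_prod, mem_Ioo, mem_Ico]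
  grind

lemma GamR_eq_union_arm (hR : 0 ≤ R) (hRL : R ≤ L) :
    GamR L = GamR R ∪ (arm R L ∪ Prod.swap ⁻¹' arm R L) := by
  ext p
  simp only [mem_GamR, arm, mem_union, mem_preimage, mem_prod, Prod.fst_swap, Prod.snd_swap,
    mem_Ioo, mem_Ico]
  grind

lemma GamR_mono (hRL : R ≤ L) : GamR R ⊆ GamR L :=
  inter_subset_inter_right _ fun _ hp =>
    ⟨hp.1.trans_le (by linarith), hp.2.trans_le (by linarith)⟩

lemma GamR_subset_Icc (R : ℝ) : GamR R ⊆ Icc (-1, -1) (R, R) := fun p hp => by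
  rw [mem_GamR] at hp
  exact ⟨⟨hp.1.1.le, hp.2.1.1.le⟩, ⟨hp.1.2.le, hp.2.1.2.le⟩⟩

lemma volume_GamR_ne_top (R : ℝ) : volume (GamR R) ≠ ⊤ :=
  measure_ne_top_of_subset (GamR_subset_Icc R) isCompact_Icc.measure_lt_top.ne

lemma integrableOn_GamR (hF : Continuous F) (R : ℝ) : IntegrableOn F (GamR R) :=
  (hF.continuousOn.integrableOn_compact isCompact_Icc).mono_set (GamR_subset_Icc R)

lemma integrableOn_arm (hF : Continuous F) (a b : ℝ) : IntegrableOn F (arm a b) :=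
  (hF.continuousOn.integrableOn_compact (isCompact_Icc.prod isCompact_Icc)).mono_set
    (prod_mono Ico_subset_Icc_self Ioo_subset_Icc_self)

lemma intervalIntegral_swap_of_continuous (hF : Continuous F) (a b c d : ℝ) :
    ∫ x in a..b, ∫ y in c..d, F (x, y) = ∫ y in c..d, ∫ x in a..b, F (x, y) :=
  intervalIntegral_intervalIntegral_swap (F := fun x y => F (x, y)) <|
    (hF.continuousOn.integrableOn_compact (isCompact_uIcc.prod isCompact_uIcc)).mono_set
      (prod_mono uIoc_subset_uIcc uIoc_subset_uIcc)

lemma setIntegral_swap_preimage (F : ℝ × ℝ → ℝ) (s : Set (ℝ × ℝ)) :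
    ∫ p in Prod.swap ⁻¹' s, F p.swap = ∫ p in s, F p :=
  Measure.measurePreserving_swap.setIntegral_preimage_emb
    MeasurableEquiv.prodComm.measurableEmbedding F s

lemma integral_GamR_swap (F : ℝ × ℝ → ℝ) (R : ℝ) :
    ∫ p in GamR R, F p.swap = ∫ p in GamR R, F p := by
  rw [← setIntegral_swap_preimage F]
  congr 2
  exact Set.ext fun p => swap_mem_GamR.symm

lemma integral_arm (hF : Continuous F) {a b : ℝ} (hab : a ≤ b) :
    ∫ p in arm a b, F p = ∫ x in a..b, ∫ y in (-1)..0, F (x, y) := by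
  rw [arm, Measure.volume_eq_prod, setIntegral_prod _ (integrableOn_arm hF a b),
    integral_Ico_eq_integral_Ioo, ← integral_Ioc_eq_integral_Ioo,
    intervalIntegral.integral_of_le hab]
  simp_rw [intervalIntegral.integral_of_le (by norm_num : (-1 : ℝ) ≤ 0),
    integral_Ioc_eq_integral_Ioo]

lemma integral_GamR (hF : Continuous F) (hR : 0 ≤ R) :
    ∫ p in GamR R, F p = (∫ x in (-1)..0, ∫ y in (-1)..R, F (x, y)) +
      ∫ x in 0..R, ∫ y in (-1)..0, F (x, y) := by
  have hR' : -1 ≤ R := by linarith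
  have hint := integrableOn_GamR hF R
  rw [GamR_eq_prod_union_arm hR] at hint ⊢
  rw [setIntegral_union _ (measurableSet_arm 0 R) hint.left_of_union hint.right_of_union,
    integral_arm hF hR, Measure.volume_eq_prod, setIntegral_prod _ hint.left_of_union,
    intervalIntegral.integral_of_le neg_one_lt_zero.le, integral_Ioc_eq_integral_Ioo]
  · simp_rw [intervalIntegral.integral_of_le hR', integral_Ioc_eq_integral_Ioo]
  · exact disjoint_left.2 fun p hp hp' => hp.1.2.not_ge hp'.1.1

lemma integral_GamR_eq_add_arm (hF : Continuous F) (hR : 0 ≤ R) (hRL : R ≤ L) :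
    ∫ p in GamR L, F p =
      (∫ p in GamR R, F p) + ((∫ p in arm R L, F p) + ∫ p in arm R L, F p.swap) := by
  have hint := integrableOn_GamR hF L
  have hmeas : MeasurableSet (Prod.swap ⁻¹' arm R L) := measurable_swap (measurableSet_arm R L)
  have hswap : ∫ p in arm R L, F p.swap = ∫ p in Prod.swap ⁻¹' arm R L, F p :=
    (setIntegral_swap_preimage (fun p => F p.swap) _).symm
  rw [GamR_eq_union_arm hR hRL] at hint ⊢
  rw [hswap, setIntegral_union _ ((measurableSet_arm R L).union hmeas) hint.left_of_union
    hint.right_of_union, setIntegral_union _ hmeas hint.right_of_union.left_of_union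
    hint.right_of_union.right_of_union]
  · exact disjoint_left.2 fun p hp hp' => hp'.2.2.not_ge (hR.trans hp.1.1)
  · refine disjoint_left.2 fun p hp hp' => ?_
    rw [mem_GamR] at hp
    rcases hp' with hp' | hp'
    · linarith [hp.1.2, hp'.1.1]
    · exact hp.2.1.2.not_ge hp'.1.1

lemma integral_GamR_mono_set (hF : Continuous F) (hF0 : ∀ p, 0 ≤ F p) (hRL : R ≤ L) :
    ∫ p in GamR R, F p ≤ ∫ p in GamR L, F p :=
  setIntegral_mono_set (integrableOn_GamR hF L) (.of_forall hF0) (GamR_mono hRL).eventuallyLE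

end Fubini

/-! ### Mass and energy -/

/-- The mass `∫ u²` over `Γ_R`, the denominator of the Rayleigh quotient. -/
def mass (R : ℝ) (u : ℝ × ℝ → ℝ) : ℝ := ∫ p in GamR R, u p ^ 2

/-- The Dirichlet energy `∫ |∇u|²` over `Γ_R`, the numerator of the Rayleigh quotient. -/
def energy (R : ℝ) (u : ℝ × ℝ → ℝ) : ℝ := ∫ p in GamR R, gradSq2 u p

section Rayleigh

variable {R L : ℝ} {u : ℝ × ℝ → ℝ}

lemma mass_nonneg (R : ℝ) (u : ℝ × ℝ → ℝ) : 0 ≤ mass R u := integral_nonneg fun _ => sq_nonneg _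

lemma energy_nonneg (R : ℝ) (u : ℝ × ℝ → ℝ) : 0 ≤ energy R u := integral_nonneg (gradSq2_nonneg u)

lemma bddBelow_rayleigh (R : ℝ) :
    BddBelow {r | ∃ u, AdmR R u ∧ mass R u ≠ 0 ∧ r = energy R u / mass R u} := by
  refine ⟨0, ?_⟩
  rintro _ ⟨u, -, -, rfl⟩
  exact div_nonneg (energy_nonneg R u) (mass_nonneg R u)

lemma lamR_nonneg (R : ℝ) : 0 ≤ lamR R := by
  refine Real.sInf_nonneg ?_
  rintro _ ⟨u, -, -, rfl⟩
  exact div_nonneg (energy_nonneg R u) (mass_nonneg R u)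

lemma AdmR.lamR_mul_mass_le (hu : AdmR R u) : lamR R * mass R u ≤ energy R u := by
  rcases (mass_nonneg R u).eq_or_lt with h | h
  · rw [← h, mul_zero]
    exact energy_nonneg R u
  · exact (le_div_iff₀ h).1 (csInf_le (bddBelow_rayleigh R) ⟨u, hu, h.ne', rfl⟩)

/-- On the arms the Dirichlet conditions hold on two walls at distance `1`. -/
lemma AdmR.sq_pi_mul_integral_arm_le (hu : AdmR L u) (hL : 0 < L) (hR : 0 ≤ R) (hRL : R ≤ L) :
    π ^ 2 * ∫ p in arm R L, u p ^ 2 ≤ ∫ p in arm R L, gradSq2 u p := by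
  have hc := hu.1.continuous
  have hc2 := continuous_derivSnd hu.1
  have hslice : ∀ x ∈ Icc R L,
      ∫ y in (-1)..0, π ^ 2 * u (x, y) ^ 2 ≤ ∫ y in (-1)..0, derivSnd u (x, y) ^ 2 := by
    intro x hx
    have hx0 : x ∈ Icc 0 L := ⟨hR.trans hx.1, hx.2⟩
    have h := sq_pi_div_mul_integral_sq_le neg_one_lt_zero
      (fun y _ => hasDerivAt_derivSnd (hu.1.differentiable one_ne_zero) x y) (by fun_prop)
      (hu.eq_zero_of_snd_eq_neg_one hL ⟨by linarith [hx0.1], hx.2⟩)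
      (hu.eq_zero_of_snd_eq_zero hL hx0)
    rw [intervalIntegral.integral_const_mul]
    simpa using h
  calc π ^ 2 * ∫ p in arm R L, u p ^ 2
      = ∫ x in R..L, ∫ y in (-1)..0, π ^ 2 * u (x, y) ^ 2 := by
        rw [← integral_const_mul, integral_arm (by fun_prop) hRL]
    _ ≤ ∫ x in R..L, ∫ y in (-1)..0, derivSnd u (x, y) ^ 2 :=
        intervalIntegral.integral_mono_on hRL (Continuous.intervalIntegrable (by fun_prop) _ _)
          (Continuous.intervalIntegrable (by fun_prop) _ _) hslice
    _ = ∫ p in arm R L, derivSnd u p ^ 2 := (integral_arm (hc2.pow 2) hRL).symm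
    _ ≤ ∫ p in arm R L, gradSq2 u p :=
        integral_mono (integrableOn_arm (hc2.pow 2) R L)
          (integrableOn_arm (continuous_gradSq2 hu.1) R L)
          fun p => le_add_of_nonneg_left (sq_nonneg _)

lemma AdmR.sq_pi_mul_mass_sub_le (hu : AdmR L u) (hL : 0 < L) (hR : 0 ≤ R) (hRL : R ≤ L) :
    π ^ 2 * (mass L u - mass R u) ≤ energy L u - energy R u := by
  have hd : Differentiable ℝ u := hu.1.differentiable one_ne_zero
  have harm := hu.sq_pi_mul_integral_arm_le hL hR hRL
  have harm' := hu.swap.sq_pi_mul_integral_arm_le hL hR hRL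
  simp_rw [gradSq2_swap hd] at harm'
  rw [mass, mass, energy, energy,
    integral_GamR_eq_add_arm (F := fun p => u p ^ 2) (hu.1.continuous.pow 2) hR hRL,
    integral_GamR_eq_add_arm (continuous_gradSq2 hu.1) hR hRL]
  linarith

/-- Ladyzhenskaya's product trick: bound `u²` once along horizontal and once along vertical
segments. -/
lemma integral_pow_four_le {a b c d : ℝ} (hab : a ≤ b) (hcd : c ≤ d) (hu : ContDiff ℝ 1 u)
    (ha : ∀ y ∈ Icc c d, u (a, y) = 0) (hc : ∀ x ∈ Icc a b, u (x, c) = 0) :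
    ∫ x in a..b, ∫ y in c..d, u (x, y) ^ 4 ≤ (b - a) * (d - c) *
      ((∫ x in a..b, ∫ y in c..d, derivFst u (x, y) ^ 2) *
        ∫ x in a..b, ∫ y in c..d, derivSnd u (x, y) ^ 2) := by
  have huc := hu.continuous
  have h1c := continuous_derivFst hu
  have h2c := continuous_derivSnd hu
  have hd : Differentiable ℝ u := hu.differentiable one_ne_zero
  have hpoint : ∀ x ∈ Icc a b, ∀ y ∈ Icc c d, u (x, y) ^ 4 ≤
      ((b - a) * ∫ x in a..b, derivFst u (x, y) ^ 2) *
        ((d - c) * ∫ y in c..d, derivSnd u (x, y) ^ 2) := by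
    intro x hx y hy
    have h1 := sq_le_mul_integral_deriv_sq (fun x _ => hasDerivAt_derivFst hd x y)
      (by fun_prop) (ha y hy) hx
    have h2 := sq_le_mul_integral_deriv_sq (fun y _ => hasDerivAt_derivSnd hd x y)
      (by fun_prop) (hc x hx) hy
    calc u (x, y) ^ 4 = u (x, y) ^ 2 * u (x, y) ^ 2 := by ring
      _ ≤ _ := mul_le_mul h1 h2 (sq_nonneg _) ((sq_nonneg _).trans h1)
  calc ∫ x in a..b, ∫ y in c..d, u (x, y) ^ 4
      ≤ ∫ x in a..b, ∫ y in c..d, ((b - a) * ∫ x in a..b, derivFst u (x, y) ^ 2) *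
          ((d - c) * ∫ y in c..d, derivSnd u (x, y) ^ 2) :=
        intervalIntegral.integral_mono_on hab (Continuous.intervalIntegrable (by fun_prop) _ _)
          (Continuous.intervalIntegrable (by fun_prop) _ _) fun x hx =>
          intervalIntegral.integral_mono_on hcd (Continuous.intervalIntegrable (by fun_prop) _ _)
            (Continuous.intervalIntegrable (by fun_prop) _ _) (hpoint x hx)
    _ = (b - a) * (d - c) * ((∫ y in c..d, ∫ x in a..b, derivFst u (x, y) ^ 2) *
          ∫ x in a..b, ∫ y in c..d, derivSnd u (x, y) ^ 2) := by
        simp_rw [intervalIntegral.integral_mul_const, intervalIntegral.integral_const_mul]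
        ring
    _ = _ := by
        rw [intervalIntegral_swap_of_continuous (F := fun p => derivFst u p ^ 2) (h1c.pow 2)]

lemma energy_swap (hu : Differentiable ℝ u) : energy R (fun p => u p.swap) = energy R u := by
  simp_rw [energy, gradSq2_swap hu, integral_GamR_swap]

lemma AdmR.integral_strip_pow_four_le (hu : AdmR R u) (hR : 0 < R) :
    ∫ x in (-1)..0, ∫ y in (-1)..R, u (x, y) ^ 4 ≤ (R + 1) * energy R u ^ 2 := by
  have hstrip : ∀ F : ℝ × ℝ → ℝ, Continuous F → (∀ p, 0 ≤ F p) → (∀ p, F p ≤ gradSq2 u p) →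
      ∫ x in (-1)..0, ∫ y in (-1)..R, F (x, y) ≤ energy R u := by
    intro F hF hF0 hFu
    have harm : 0 ≤ ∫ x in 0..R, ∫ y in (-1)..0, F (x, y) :=
      intervalIntegral.integral_nonneg hR.le fun x _ =>
        intervalIntegral.integral_nonneg neg_one_lt_zero.le fun y _ => hF0 _
    have hmono := integral_mono (integrableOn_GamR hF R)
      (integrableOn_GamR (continuous_gradSq2 hu.1) R) hFu
    rw [integral_GamR hF hR.le] at hmono
    exact (le_add_of_nonneg_right harm).trans hmono
  have hfst := hstrip (fun p => derivFst u p ^ 2) ((continuous_derivFst hu.1).pow 2)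
    (fun p => sq_nonneg _) fun p => le_add_of_nonneg_right (sq_nonneg _)
  have hsnd := hstrip (fun p => derivSnd u p ^ 2) ((continuous_derivSnd hu.1).pow 2)
    (fun p => sq_nonneg _) fun p => le_add_of_nonneg_left (sq_nonneg _)
  have hsnd0 : 0 ≤ ∫ x in (-1)..0, ∫ y in (-1)..R, derivSnd u (x, y) ^ 2 :=
    intervalIntegral.integral_nonneg neg_one_lt_zero.le fun x _ =>
      intervalIntegral.integral_nonneg (by linarith) fun y _ => sq_nonneg _
  have h := integral_pow_four_le neg_one_lt_zero.le (by linarith : -1 ≤ R) hu.1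
    (fun y hy => hu.swap.eq_zero_of_snd_eq_neg_one hR hy)
    (fun x hx => hu.eq_zero_of_snd_eq_neg_one hR ⟨hx.1, hx.2.trans hR.le⟩)
  calc _ ≤ _ := h
    _ ≤ (0 - -1) * (R - -1) * (energy R u * energy R u) :=
        mul_le_mul_of_nonneg_left (mul_le_mul hfst hsnd hsnd0 (energy_nonneg R u)) (by linarith)
    _ = (R + 1) * energy R u ^ 2 := by ring

lemma AdmR.integral_pow_four_le (hu : AdmR R u) (hR : 0 < R) :
    ∫ p in GamR R, u p ^ 4 ≤ 2 * (R + 1) * energy R u ^ 2 := by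
  have hc : Continuous fun p => u p ^ 4 := hu.1.continuous.pow 4
  have hinner : Continuous fun x => ∫ y in (-1)..0, u (x, y) ^ 4 := by fun_prop
  have harm : ∫ x in 0..R, ∫ y in (-1)..0, u (x, y) ^ 4 ≤
      ∫ x in (-1)..R, ∫ y in (-1)..0, u (x, y) ^ 4 :=
    intervalIntegral.integral_mono_interval neg_one_lt_zero.le hR.le le_rfl
      (.of_forall fun x => intervalIntegral.integral_nonneg neg_one_lt_zero.le fun y _ => by
        positivity) (hinner.intervalIntegrable _ _)
  have hswap := hu.swap.integral_strip_pow_four_le hR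
  rw [energy_swap (hu.1.differentiable one_ne_zero)] at hswap
  rw [intervalIntegral_swap_of_continuous hc (-1)] at harm
  rw [integral_GamR hc hR.le]
  simp only [Prod.swap_prod_mk] at hswap
  linarith [hu.integral_strip_pow_four_le hR]

end Rayleigh

/-! ### Minimizing sequences -/

section Minimizing

variable {R : ℝ} {u v : ℝ × ℝ → ℝ}

lemma AdmR.add_const_mul (hu : AdmR R u) (hv : AdmR R v) (t : ℝ) :
    AdmR R fun p => u p + t * v p :=
  ⟨hu.1.add (contDiff_const.mul hv.1), fun p hp => by simp [hu.2 p hp, hv.2 p hp]⟩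

lemma mass_const_mul (R c : ℝ) (u : ℝ × ℝ → ℝ) :
    mass R (fun p => c * u p) = c ^ 2 * mass R u := by
  simp_rw [mass, mul_pow, integral_const_mul]

lemma energy_const_mul (hu : Differentiable ℝ u) (R c : ℝ) :
    energy R (fun p => c * u p) = c ^ 2 * energy R u := by
  have hgrad (p : ℝ × ℝ) : gradSq2 (fun q => c * u q) p = c ^ 2 * gradSq2 u p := by
    simpa using gradSq2_comp hu (differentiable_id.const_mul c) p
  simp_rw [energy, hgrad, integral_const_mul]

lemma mass_softAbs_ge (hu : Continuous u) {η : ℝ} (hη : 0 < η) (R : ℝ) :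
    mass R u - 2 * η * ∫ p in GamR R, |u p| ≤ mass R fun p => softAbs η (u p) := by
  have husq : Continuous fun p => u p ^ 2 := hu.pow 2
  rw [mass, ← integral_const_mul, ← integral_sub (integrableOn_GamR husq R)
    (integrableOn_GamR (by fun_prop) R)]
  exact integral_mono (integrableOn_GamR (by fun_prop) R)
    (integrableOn_GamR (((contDiff_softAbs hη).continuous.comp hu).pow 2) R)
    fun p => sq_sub_le_sq_softAbs hη.le (u p)

lemma energy_softAbs_le (hu : ContDiff ℝ 1 u) {η : ℝ} (hη : 0 < η) (R : ℝ) :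
    energy R (fun p => softAbs η (u p)) ≤ energy R u := by
  have hh := contDiff_softAbs hη
  refine integral_mono (integrableOn_GamR (continuous_gradSq2 (hh.comp hu)) R)
    (integrableOn_GamR (continuous_gradSq2 hu) R) fun p => ?_
  rw [gradSq2_comp (hu.differentiable one_ne_zero) (hh.differentiable one_ne_zero)]
  exact mul_le_of_le_one_left (gradSq2_nonneg u p) (sq_deriv_softAbs_le_one hη _)

lemma exists_nonneg_energy_lt (hu : AdmR R u) {Λ : ℝ} (h : energy R u < Λ * mass R u) :
    ∃ v, AdmR R v ∧ (∀ p, 0 ≤ v p) ∧ energy R v < Λ * mass R v := by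
  have hΛ : 0 < Λ := pos_of_mul_pos_left ((energy_nonneg R u).trans_lt h) (mass_nonneg R u)
  have hlim : Tendsto (fun η => Λ * (mass R u - 2 * η * ∫ p in GamR R, |u p|)) (𝓝[>] 0)
      (𝓝 (Λ * mass R u)) := by
    refine (Continuous.tendsto' (by fun_prop) _ _ (by simp)).mono_left nhdsWithin_le_nhds
  obtain ⟨η, hη, hη0⟩ := ((hlim.eventually_const_lt h).and self_mem_nhdsWithin).exists
  refine ⟨_, hu.comp (contDiff_softAbs hη0) (softAbs_zero (le_of_lt hη0)),
    fun p => softAbs_nonneg η _, ?_⟩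
  calc energy R (fun p => softAbs η (u p)) ≤ energy R u := energy_softAbs_le hu.1 hη0 R
    _ < Λ * (mass R u - 2 * η * ∫ p in GamR R, |u p|) := hη
    _ ≤ _ := mul_le_mul_of_nonneg_left (mass_softAbs_ge hu.1.continuous hη0 R) hΛ.le

lemma AdmR.lamR_lt (hu : AdmR R u) {Λ : ℝ} (h : energy R u < Λ * mass R u) : lamR R < Λ :=
  lt_of_mul_lt_mul_right (hu.lamR_mul_mass_le.trans_lt h) (mass_nonneg R u)

/-- A minimizing sequence for `λ₁(Γ_R)` made of nonnegative normalized admissible functions. -/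
structure IsMinimizingSeq (R : ℝ) (u : ℕ → ℝ × ℝ → ℝ) : Prop where
  adm : ∀ n, AdmR R (u n)
  nonneg : ∀ n p, 0 ≤ u n p
  mass_eq_one : ∀ n, mass R (u n) = 1
  tendsto_energy : Tendsto (fun n => energy R (u n)) atTop (𝓝 (lamR R))

lemma exists_normalized_energy_lt (hu : AdmR R u) (hu0 : mass R u ≠ 0) {Λ : ℝ}
    (hΛ : lamR R < Λ) :
    ∃ v, AdmR R v ∧ (∀ p, 0 ≤ v p) ∧ mass R v = 1 ∧ energy R v < Λ := by
  obtain ⟨_, ⟨w, hw, hw0, rfl⟩, hwΛ⟩ :=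
    exists_lt_of_csInf_lt (by exact ⟨_, u, hu, hu0, rfl⟩) hΛ
  obtain ⟨v, hv, hv0, hvΛ⟩ := exists_nonneg_energy_lt hw
    ((div_lt_iff₀ ((mass_nonneg R w).lt_of_ne' hw0)).1 hwΛ)
  have hm : 0 < mass R v := (mass_nonneg R v).lt_of_ne' fun h => by
    rw [h, mul_zero] at hvΛ
    exact hvΛ.not_ge (energy_nonneg R v)
  have hscale : (√(mass R v))⁻¹ ^ 2 = (mass R v)⁻¹ := by rw [inv_pow, sq_sqrt hm.le]
  refine ⟨_, hv.comp (h := fun s => (√(mass R v))⁻¹ * s) (by fun_prop) (mul_zero _),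
    fun p => mul_nonneg (by positivity) (hv0 p), ?_, ?_⟩
  · rw [mass_const_mul, hscale, inv_mul_cancel₀ hm.ne']
  · rw [energy_const_mul (hv.1.differentiable one_ne_zero), hscale, inv_mul_lt_iff₀ hm, mul_comm]
    exact hvΛ

lemma exists_isMinimizingSeq (hu : AdmR R u) (hu0 : mass R u ≠ 0) :
    ∃ v, IsMinimizingSeq R v := by
  have hpos (n : ℕ) : lamR R < lamR R + 1 / (n + 1) := lt_add_of_pos_right _ (by positivity)
  choose v hv hv0 hv1 hvΛ using fun n => exists_normalized_energy_lt hu hu0 (hpos n)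
  refine ⟨v, hv, hv0, hv1, tendsto_of_tendsto_of_tendsto_of_le_of_le tendsto_const_nhds ?_
    (fun n => ?_) fun n => (hvΛ n).le⟩
  · simpa using tendsto_one_div_add_atTop_nhds_zero_nat.const_add (lamR R)
  · simpa [hv1 n] using (hv n).lamR_mul_mass_le

/-- The density `∇u·∇v - λ₁(Γ_R) uv` of `excessForm`. -/
def excessDensity (R : ℝ) (u v : ℝ × ℝ → ℝ) (p : ℝ × ℝ) : ℝ :=
  derivFst u p * derivFst v p + derivSnd u p * derivSnd v p - lamR R * (u p * v p)

/-- The bilinear form `∫ ∇u·∇v - λ₁(Γ_R) uv` over `Γ_R`, nonnegative on admissible functions. -/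
def excessForm (R : ℝ) (u v : ℝ × ℝ → ℝ) : ℝ := ∫ p in GamR R, excessDensity R u v p

lemma integrableOn_excessDensity (hu : ContDiff ℝ 1 u) (hv : ContDiff ℝ 1 v) (R : ℝ) :
    IntegrableOn (excessDensity R u v) (GamR R) :=
  integrableOn_GamR ((((continuous_derivFst hu).mul (continuous_derivFst hv)).add
    ((continuous_derivSnd hu).mul (continuous_derivSnd hv))).sub
    ((hu.continuous.mul hv.continuous).const_mul _)) R

lemma excessForm_self (hu : ContDiff ℝ 1 u) (R : ℝ) :
    excessForm R u u = energy R u - lamR R * mass R u := by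
  have hc := hu.continuous
  rw [energy, mass, ← integral_const_mul, ← integral_sub (integrableOn_GamR
    (continuous_gradSq2 hu) R) (integrableOn_GamR (by fun_prop) R)]
  simp only [excessForm, excessDensity, gradSq2_eq, sq]

lemma AdmR.excessForm_self_nonneg (hu : AdmR R u) : 0 ≤ excessForm R u u := by
  rw [excessForm_self hu.1]
  exact sub_nonneg.2 hu.lamR_mul_mass_le

lemma excessForm_add_const_mul_self (hu : ContDiff ℝ 1 u) (hv : ContDiff ℝ 1 v) (R t : ℝ) :
    excessForm R (fun p => u p + t * v p) (fun p => u p + t * v p) =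
      excessForm R v v * (t * t) + 2 * excessForm R u v * t + excessForm R u u := by
  have hvv := (integrableOn_excessDensity hv hv R).mul_const (t * t)
  have huv := ((integrableOn_excessDensity hu hv R).const_mul 2).mul_const t
  have hud := hu.differentiable one_ne_zero
  have hvd := hv.differentiable one_ne_zero
  simp_rw [excessForm]
  rw [← integral_mul_const, ← integral_const_mul, ← integral_mul_const, ← integral_add hvv huv,
    ← integral_add (f := fun p => _ + _) (hvv.add huv) (integrableOn_excessDensity hu hu R)]
  congr 1 with p
  simp only [excessDensity, derivFst_add_const_mul hud hvd, derivSnd_add_const_mul hud hvd]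
  ring

lemma AdmR.sq_excessForm_le (hu : AdmR R u) (hv : AdmR R v) :
    excessForm R u v ^ 2 ≤ excessForm R u u * excessForm R v v := by
  have h : discrim (excessForm R v v) (2 * excessForm R u v) (excessForm R u u) ≤ 0 := by
    refine discrim_le_zero fun t => ?_
    rw [← excessForm_add_const_mul_self hu.1 hv.1]
    exact (hu.add_const_mul hv t).excessForm_self_nonneg
  rw [discrim] at h
  linarith

lemma IsMinimizingSeq.tendsto_excessForm {u : ℕ → ℝ × ℝ → ℝ} (hu : IsMinimizingSeq R u)
    (hv : AdmR R v) : Tendsto (fun n => excessForm R (u n) v) atTop (𝓝 0) := by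
  have hself : Tendsto (fun n => excessForm R (u n) (u n)) atTop (𝓝 0) := by
    simp_rw [excessForm_self (hu.adm _).1, hu.mass_eq_one]
    simpa using hu.tendsto_energy.sub_const (lamR R)
  refine tendsto_zero_of_sq_le (fun n => (hu.adm n).sq_excessForm_le hv) ?_
  simpa using hself.mul_const (excessForm R v v)

end Minimizing

/-! ### A trial function with Rayleigh quotient below `π²` -/

/-- The function `p(x₁) q(x₂) + q(x₁) p(x₂)` on the corner `(-1, 0)²`, continued into the arms by
freezing the longitudinal variable at `0`. -/
def cornerProd (p q : ℝ → ℝ) (z : ℝ × ℝ) : ℝ :=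
  p (min z.1 0) * q (min z.2 0) + q (min z.1 0) * p (min z.2 0)

section CornerProd

variable {L : ℝ} {p p' q q' : ℝ → ℝ}

lemma integral_GamR_mul_comp_min {f g : ℝ → ℝ} (hf : Continuous f) (hg : Continuous g)
    (hL : 0 ≤ L) (hg0 : g 0 = 0) :
    ∫ z in GamR L, f (min z.1 0) * g (min z.2 0) =
      ((∫ t in (-1)..0, f t) + L * f 0) * ∫ t in (-1)..0, g t := by
  have hcorner (h : ℝ → ℝ) : ∫ t in (-1)..0, h (min t 0) = ∫ t in (-1)..0, h t :=
    intervalIntegral.integral_congr fun t ht => by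
      rw [uIcc_of_le neg_one_lt_zero.le] at ht
      exact congrArg h (min_eq_left ht.2)
  have harm (h : ℝ → ℝ) : ∫ t in 0..L, h (min t 0) = L * h 0 := by
    rw [intervalIntegral.integral_congr (g := fun _ => h 0) fun t ht => ?_]
    · simp
    · rw [uIcc_of_le hL] at ht
      exact congrArg h (min_eq_right ht.1)
  have hgc : Continuous fun t => g (min t 0) := by fun_prop
  have hgL : ∫ t in (-1)..L, g (min t 0) = ∫ t in (-1)..0, g t := by
    rw [← intervalIntegral.integral_add_adjacent_intervals (hgc.intervalIntegrable (-1) 0)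
      (hgc.intervalIntegrable 0 L), hcorner, harm, hg0, mul_zero, add_zero]
  rw [integral_GamR (by fun_prop) hL]
  simp_rw [intervalIntegral.integral_const_mul, intervalIntegral.integral_mul_const, hgL,
    hcorner, harm]
  ring

lemma integral_GamR_sq_mul_add_mul {f g h k : ℝ → ℝ} (hf : Continuous f) (hg : Continuous g)
    (hh : Continuous h) (hk : Continuous k) (hL : 0 ≤ L) (hg0 : g 0 = 0) (hh0 : h 0 = 0) :
    ∫ z in GamR L, (f (min z.1 0) * g (min z.2 0) + h (min z.1 0) * k (min z.2 0)) ^ 2 =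
      ((∫ t in (-1)..0, f t ^ 2) + L * f 0 ^ 2) * (∫ t in (-1)..0, g t ^ 2) +
      2 * ((∫ t in (-1)..0, f t * h t) * ∫ t in (-1)..0, g t * k t) +
      ((∫ t in (-1)..0, k t ^ 2) + L * k 0 ^ 2) * ∫ t in (-1)..0, h t ^ 2 := by
  have hfg := integral_GamR_mul_comp_min (hf.pow 2) (hg.pow 2) hL (by simp [hg0])
  have hcross := integral_GamR_mul_comp_min (hf.mul hh) (hg.mul hk) hL (by simp [hg0])
  have hkh := integral_GamR_mul_comp_min (hk.pow 2) (hh.pow 2) hL (by simp [hh0])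
  rw [← integral_GamR_swap] at hkh
  simp only [Pi.mul_apply, Pi.pow_apply, hh0, mul_zero, add_zero, Prod.fst_swap, Prod.snd_swap]
    at hfg hcross hkh
  rw [← hfg, ← hcross, ← hkh, ← integral_const_mul,
    ← integral_add (integrableOn_GamR (by fun_prop) L) (integrableOn_GamR (by fun_prop) L),
    ← integral_add (integrableOn_GamR (by fun_prop) L) (integrableOn_GamR (by fun_prop) L)]
  congr 1 with z
  ring

lemma mass_cornerProd (hp : Continuous p) (hq : Continuous q) (hL : 0 ≤ L) (hq0 : q 0 = 0) :
    mass L (cornerProd p q) =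
      2 * ((∫ t in (-1)..0, p t ^ 2) + L * p 0 ^ 2) * (∫ t in (-1)..0, q t ^ 2) +
      2 * (∫ t in (-1)..0, p t * q t) ^ 2 := by
  simp_rw [mass, cornerProd]
  rw [integral_GamR_sq_mul_add_mul hp hq hq hp hL hq0 hq0]
  simp_rw [mul_comm (q _) (p _)]
  ring

lemma hasDerivAt_cornerProd_fst (hp : ∀ t, HasDerivAt p (p' t) t) (hp'0 : p' 0 = 0)
    (hq : ∀ t, HasDerivAt q (q' t) t) (hq'0 : q' 0 = 0) (x y : ℝ) :
    HasDerivAt (fun x => cornerProd p q (x, y))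
      (p' (min x 0) * q (min y 0) + q' (min x 0) * p (min y 0)) x :=
  ((hasDerivAt_comp_min hp hp'0 x).mul_const (q (min y 0))).add
    ((hasDerivAt_comp_min hq hq'0 x).mul_const (p (min y 0)))

lemma cornerProd_swap (p q : ℝ → ℝ) (z : ℝ × ℝ) : cornerProd p q z.swap = cornerProd p q z := by
  simp only [cornerProd, Prod.fst_swap, Prod.snd_swap]
  ring

lemma admR_cornerProd (hp : ∀ t, HasDerivAt p (p' t) t) (hp' : Continuous p') (hp'0 : p' 0 = 0)
    (hq : ∀ t, HasDerivAt q (q' t) t) (hq' : Continuous q') (hq'0 : q' 0 = 0)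
    (hp1 : p (-1) = 0) (hq1 : q (-1) = 0) (hq0 : q 0 = 0) (L : ℝ) :
    AdmR L (cornerProd p q) := by
  have hpC : ContDiff ℝ 1 fun t => p (min t 0) :=
    contDiff_one_of_hasDerivAt (hasDerivAt_comp_min hp hp'0) (by fun_prop)
  have hqC : ContDiff ℝ 1 fun t => q (min t 0) :=
    contDiff_one_of_hasDerivAt (hasDerivAt_comp_min hq hq'0) (by fun_prop)
  refine ⟨((hpC.comp contDiff_fst).mul (hqC.comp contDiff_snd)).add
    ((hqC.comp contDiff_fst).mul (hpC.comp contDiff_snd)), fun z hz => ?_⟩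
  rw [mem_DirB] at hz
  rcases hz.1 with hmin | hmin
  · rcases min_choice z.1 z.2 with h | h
    all_goals
      rw [h] at hmin
      simp [cornerProd, hmin, hp1, hq1]
  · have h1 : 0 ≤ z.1 := hmin ▸ min_le_left z.1 z.2
    have h2 : 0 ≤ z.2 := hmin ▸ min_le_right z.1 z.2
    simp [cornerProd, h1, h2, hq0]

lemma energy_cornerProd (hp : ∀ t, HasDerivAt p (p' t) t) (hp' : Continuous p')
    (hp'0 : p' 0 = 0) (hq : ∀ t, HasDerivAt q (q' t) t) (hq' : Continuous q') (hq'0 : q' 0 = 0)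
    (hu : ContDiff ℝ 1 (cornerProd p q)) (hq0 : q 0 = 0) (hL : 0 ≤ L) :
    energy L (cornerProd p q) =
      2 * (∫ t in (-1)..0, p' t ^ 2) * (∫ t in (-1)..0, q t ^ 2) +
      4 * (∫ t in (-1)..0, p' t * q' t) * (∫ t in (-1)..0, p t * q t) +
      2 * ((∫ t in (-1)..0, p t ^ 2) + L * p 0 ^ 2) * ∫ t in (-1)..0, q' t ^ 2 := by
  have hd := hu.differentiable one_ne_zero
  have hpc : Continuous p := (contDiff_one_of_hasDerivAt hp hp').continuous
  have hqc : Continuous q := (contDiff_one_of_hasDerivAt hq hq').continuous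
  have hfst (z : ℝ × ℝ) : derivFst (cornerProd p q) z =
      p' (min z.1 0) * q (min z.2 0) + q' (min z.1 0) * p (min z.2 0) :=
    (hasDerivAt_derivFst hd z.1 z.2).unique (hasDerivAt_cornerProd_fst hp hp'0 hq hq'0 z.1 z.2)
  have hsnd (z : ℝ × ℝ) : derivSnd (cornerProd p q) z = derivFst (cornerProd p q) z.swap := by
    rw [← derivSnd_swap hd]
    simp_rw [cornerProd_swap]
  have hint : IntegrableOn (fun z => derivFst (cornerProd p q) z ^ 2) (GamR L) :=
    integrableOn_GamR ((continuous_derivFst hu).pow 2) L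
  have hint' : IntegrableOn (fun z => derivFst (cornerProd p q) z.swap ^ 2) (GamR L) :=
    integrableOn_GamR (((continuous_derivFst hu).comp continuous_swap).pow 2) L
  simp_rw [energy, gradSq2_eq, hsnd]
  rw [integral_add hint hint',
    integral_GamR_swap fun z => derivFst (cornerProd p q) z ^ 2]
  simp_rw [hfst]
  rw [integral_GamR_sq_mul_add_mul hp' hqc hq' hpc hL hq0 hq'0, hp'0]
  simp_rw [mul_comm (q _) (p _)]
  ring

end CornerProd

lemma integral_sin_const_mul_sq {k : ℝ} (hk : k ≠ 0) (hsin : sin k * cos k = 0) :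
    ∫ t in (-1)..0, sin (k * t) ^ 2 = 1 / 2 := by
  rw [intervalIntegral.integral_comp_mul_left (fun t => sin t ^ 2) hk, integral_sin_sq]
  simp only [mul_neg, mul_one, sin_neg, cos_neg, neg_mul, hsin, neg_zero, mul_zero, sin_zero,
    cos_zero, sub_self, add_zero, sub_neg_eq_add, zero_add, smul_eq_mul, one_div]
  field_simp

lemma integral_cos_pi_mul_sq : ∫ t in (-1)..0, cos (π * t) ^ 2 = 1 / 2 := by
  rw [intervalIntegral.integral_comp_mul_left (fun t => cos t ^ 2) pi_ne_zero, integral_cos_sq]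
  simp only [mul_zero, cos_zero, sin_zero, mul_neg, mul_one, cos_neg, cos_pi, sin_neg, sin_pi,
    neg_zero, sub_self, add_zero, sub_neg_eq_add, zero_add, smul_eq_mul, one_div]
  field_simp

lemma integral_cos_mul_neg_sin :
    ∫ t in (-1)..0, cos (π / 2 * t) * -sin (π * t) = 4 / (3 * π) := by
  have hderiv : ∀ t, HasDerivAt (fun t => 4 / (3 * π) * cos (π / 2 * t) ^ 3)
      (cos (π / 2 * t) * -sin (π * t)) t := fun t => by
    have hcos : HasDerivAt (fun t => cos (π / 2 * t)) (-sin (π / 2 * t) * (π / 2)) t := by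
      simpa using ((hasDerivAt_id t).const_mul (π / 2)).cos
    refine ((hcos.pow 3).const_mul (4 / (3 * π))).congr_deriv ?_
    rw [show π * t = 2 * (π / 2 * t) by ring, sin_two_mul]
    field_simp
    ring
  rw [intervalIntegral.integral_eq_sub_of_hasDerivAt (fun t _ => hderiv t)
    (Continuous.intervalIntegrable (by fun_prop) _ _)]
  simp

/-- A `C¹` substitute for `|sin (π t)|` whose derivative vanishes at `0`. -/
def softSine (η t : ℝ) : ℝ := softAbs η (sin (π * t))

section softSine

variable {η : ℝ}

lemma contDiff_softSine (hη : 0 < η) : ContDiff ℝ 1 (softSine η) :=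
  (contDiff_softAbs hη).comp (contDiff_sin.comp (contDiff_const.mul contDiff_id))

lemma deriv_softSine (hη : 0 < η) (t : ℝ) :
    deriv (softSine η) t = deriv (softAbs η) (sin (π * t)) * (π * cos (π * t)) := by
  have hsin : HasDerivAt (fun t => sin (π * t)) (cos (π * t) * π) t := by
    simpa using ((hasDerivAt_id t).const_mul π).sin
  rw [mul_comm π (cos _)]
  exact ((hasDerivAt_softAbs hη _).differentiableAt.hasDerivAt.comp t hsin).deriv

lemma softSine_zero (hη : 0 < η) : softSine η 0 = 0 := by
  simp [softSine, softAbs_zero hη.le]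

lemma softSine_neg_one (hη : 0 < η) : softSine η (-1) = 0 := by
  simp [softSine, softAbs_zero hη.le]

lemma integral_softSine_sq_le (hη : 0 < η) : ∫ t in (-1)..0, softSine η t ^ 2 ≤ 1 / 2 := by
  have hc := (contDiff_softSine hη).continuous
  rw [← integral_sin_const_mul_sq pi_ne_zero (by simp)]
  refine intervalIntegral.integral_mono_on neg_one_lt_zero.le
    (Continuous.intervalIntegrable (by fun_prop) _ _)
    (Continuous.intervalIntegrable (by fun_prop) _ _) fun t _ => ?_
  rw [← sq_abs (sin _)]
  exact pow_le_pow_left₀ (softAbs_nonneg η _) (softAbs_le_abs hη.le _) 2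

lemma le_integral_softSine_sq (hη : 0 < η) :
    1 / 2 - 2 * η ≤ ∫ t in (-1)..0, softSine η t ^ 2 := by
  have hc := (contDiff_softSine hη).continuous
  have hpoint (t : ℝ) : sin (π * t) ^ 2 - 2 * η ≤ softSine η t ^ 2 := by
    have h := mul_le_mul_of_nonneg_left (abs_sin_le_one (π * t)) (by positivity : 0 ≤ 2 * η)
    have h' := sq_sub_le_sq_softAbs hη.le (sin (π * t))
    rw [softSine]
    linarith
  calc 1 / 2 - 2 * η = ∫ t in (-1)..0, (sin (π * t) ^ 2 - 2 * η) := by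
        rw [intervalIntegral.integral_sub (Continuous.intervalIntegrable (by fun_prop) _ _)
          intervalIntegrable_const, integral_sin_const_mul_sq pi_ne_zero (by simp)]
        simp
    _ ≤ _ := intervalIntegral.integral_mono neg_one_lt_zero.le
        (Continuous.intervalIntegrable (by fun_prop) _ _)
        (Continuous.intervalIntegrable (by fun_prop) _ _) hpoint

lemma integral_deriv_softSine_sq_le (hη : 0 < η) :
    ∫ t in (-1)..0, deriv (softSine η) t ^ 2 ≤ π ^ 2 / 2 := by
  have hc := (contDiff_softSine hη).continuous_deriv_one
  calc ∫ t in (-1)..0, deriv (softSine η) t ^ 2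
      ≤ ∫ t in (-1)..0, π ^ 2 * cos (π * t) ^ 2 :=
        intervalIntegral.integral_mono neg_one_lt_zero.le
          (Continuous.intervalIntegrable (by fun_prop) _ _)
          (Continuous.intervalIntegrable (by fun_prop) _ _) fun t => by
            simp only [deriv_softSine hη, mul_pow]
            exact mul_le_of_le_one_left (by positivity) (sq_deriv_softAbs_le_one hη _)
    _ = π ^ 2 / 2 := by
        rw [intervalIntegral.integral_const_mul, integral_cos_pi_mul_sq]
        ring

lemma le_integral_cos_mul_softSine (hη : 0 < η) :
    4 / (3 * π) - η ≤ ∫ t in (-1)..0, cos (π / 2 * t) * softSine η t := by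
  have hc := (contDiff_softSine hη).continuous
  have hpoint : ∀ t ∈ Icc (-1) 0,
      cos (π / 2 * t) * -sin (π * t) - η ≤ cos (π / 2 * t) * softSine η t := by
    intro t ht
    have hcos : 0 ≤ cos (π / 2 * t) := cos_nonneg_of_mem_Icc
      ⟨by nlinarith [pi_pos, ht.1], by nlinarith [pi_pos, ht.2]⟩
    have hsoft : -sin (π * t) - η ≤ softSine η t :=
      (sub_le_sub_right (neg_le_abs _) η).trans (abs_sub_le_softAbs η _)
    nlinarith [mul_le_mul_of_nonneg_left hsoft hcos, cos_le_one (π / 2 * t)]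
  calc 4 / (3 * π) - η = ∫ t in (-1)..0, (cos (π / 2 * t) * -sin (π * t) - η) := by
        rw [intervalIntegral.integral_sub (Continuous.intervalIntegrable (by fun_prop) _ _)
          intervalIntegrable_const, integral_cos_mul_neg_sin]
        simp
    _ ≤ _ := intervalIntegral.integral_mono_on neg_one_lt_zero.le
        (Continuous.intervalIntegrable (by fun_prop) _ _)
        (Continuous.intervalIntegrable (by fun_prop) _ _) hpoint

lemma integral_deriv_cos_mul_deriv (hη : 0 < η) :
    ∫ t in (-1)..0, -(π / 2) * sin (π / 2 * t) * deriv (softSine η) t =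
      π ^ 2 / 4 * ∫ t in (-1)..0, cos (π / 2 * t) * softSine η t := by
  have hC := contDiff_softSine hη
  have hsin : ∀ t, HasDerivAt (fun t => -(π / 2) * sin (π / 2 * t))
      (-(π / 2) * (cos (π / 2 * t) * (π / 2))) t := fun t => by
    simpa using (((hasDerivAt_id t).const_mul (π / 2)).sin).const_mul (-(π / 2))
  rw [intervalIntegral.integral_mul_deriv_eq_deriv_mul (fun t _ => hsin t)
    (fun t _ => (hC.differentiable one_ne_zero t).hasDerivAt)
    (Continuous.intervalIntegrable (by fun_prop) _ _)
    (hC.continuous_deriv_one.intervalIntegrable _ _), ← intervalIntegral.integral_const_mul]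
  rw [softSine_neg_one hη, mul_zero, mul_zero, sin_zero, mul_zero, zero_mul, sub_zero, zero_sub,
    ← intervalIntegral.integral_neg]
  congr 1 with t
  ring

/-- The trial function: on the corner it interpolates between the ground states `|sin (π t)|` of
the cross-sections of the two arms. -/
def softTrial (η : ℝ) : ℝ × ℝ → ℝ := cornerProd (fun t => cos (π / 2 * t)) (softSine η)

lemma hasDerivAt_cos_half_pi_mul (t : ℝ) :
    HasDerivAt (fun t => cos (π / 2 * t)) (-(π / 2) * sin (π / 2 * t)) t := by
  simpa [mul_comm] using ((hasDerivAt_id t).const_mul (π / 2)).cos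

lemma hasDerivAt_softSine (hη : 0 < η) (t : ℝ) :
    HasDerivAt (softSine η) (deriv (softSine η) t) t :=
  ((contDiff_softSine hη).differentiable one_ne_zero t).hasDerivAt

lemma deriv_softSine_zero (hη : 0 < η) : deriv (softSine η) 0 = 0 := by
  simp [deriv_softSine hη, deriv_softAbs_zero hη]

lemma admR_softTrial (hη : 0 < η) (L : ℝ) : AdmR L (softTrial η) :=
  admR_cornerProd hasDerivAt_cos_half_pi_mul (by fun_prop) (by simp) (hasDerivAt_softSine hη)
    (contDiff_softSine hη).continuous_deriv_one (deriv_softSine_zero hη) (by simp)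
    (softSine_neg_one hη) (softSine_zero hη) L

lemma energy_softTrial_sub (hη : 0 < η) {L : ℝ} (hL : 0 ≤ L) :
    energy L (softTrial η) - π ^ 2 * mass L (softTrial η) =
      2 * ((∫ t in (-1)..0, cos (π / 2 * t) ^ 2) + L) *
        ((∫ t in (-1)..0, deriv (softSine η) t ^ 2) - π ^ 2 * ∫ t in (-1)..0, softSine η t ^ 2) +
      π ^ 2 / 4 * (∫ t in (-1)..0, softSine η t ^ 2) -
      (π * ∫ t in (-1)..0, cos (π / 2 * t) * softSine η t) ^ 2 := by
  have hC := contDiff_softSine hη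
  have hP' : ∫ t in (-1)..0, (-(π / 2) * sin (π / 2 * t)) ^ 2 = π ^ 2 / 8 := by
    simp_rw [mul_pow]
    rw [intervalIntegral.integral_const_mul, integral_sin_const_mul_sq (by positivity) (by simp)]
    ring
  rw [softTrial, energy_cornerProd hasDerivAt_cos_half_pi_mul (by fun_prop) (by simp)
    (hasDerivAt_softSine hη) hC.continuous_deriv_one (deriv_softSine_zero hη)
    (admR_softTrial hη L).1 (softSine_zero hη) hL, mass_cornerProd (by fun_prop) hC.continuous hL
    (softSine_zero hη), integral_deriv_cos_mul_deriv hη, hP', mul_zero, cos_zero]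
  ring

lemma energy_softTrial_sub_le (hη : 0 < η) {L : ℝ} (hL : 0 ≤ L) (hsmall : π * η ≤ 4 / 3) :
    energy L (softTrial η) - π ^ 2 * mass L (softTrial η) ≤
      4 * π ^ 2 * (1 + L) * η + π ^ 2 / 8 - (4 / 3 - π * η) ^ 2 := by
  have hP : ∫ t in (-1)..0, cos (π / 2 * t) ^ 2 ≤ 1 := by
    simpa using intervalIntegral.integral_mono (μ := volume) (g := fun _ => (1 : ℝ))
      neg_one_lt_zero.le (Continuous.intervalIntegrable (by fun_prop) _ _)
      intervalIntegrable_const fun t => cos_sq_le_one (π / 2 * t)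
  have hP0 : 0 ≤ ∫ t in (-1)..0, cos (π / 2 * t) ^ 2 :=
    intervalIntegral.integral_nonneg neg_one_lt_zero.le fun t _ => sq_nonneg _
  have ha := mul_le_mul_of_nonneg_left (integral_softSine_sq_le hη) (sq_nonneg π)
  have ha' := mul_le_mul_of_nonneg_left (le_integral_softSine_sq hη) (sq_nonneg π)
  have hb : 4 / 3 - π * η ≤ π * ∫ t in (-1)..0, cos (π / 2 * t) * softSine η t := by
    refine le_of_eq_of_le ?_ (mul_le_mul_of_nonneg_left (le_integral_cos_mul_softSine hη) pi_pos.le)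
    field_simp
  have hb2 := pow_le_pow_left₀ (sub_nonneg.2 hsmall) hb 2
  have harms : ((∫ t in (-1)..0, cos (π / 2 * t) ^ 2) + L) *
      ((∫ t in (-1)..0, deriv (softSine η) t ^ 2) - π ^ 2 * ∫ t in (-1)..0, softSine η t ^ 2) ≤
      (1 + L) * (2 * π ^ 2 * η) :=
    (mul_le_mul_of_nonneg_left (by linarith [integral_deriv_softSine_sq_le hη])
      (by positivity)).trans (mul_le_mul_of_nonneg_right (by linarith) (by positivity))
  rw [energy_softTrial_sub hη hL]
  linarith

lemma exists_admR_energy_lt {L : ℝ} (hL : 0 ≤ L) :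
    ∃ u, AdmR L u ∧ energy L u < π ^ 2 * mass L u := by
  have hlim : Tendsto (fun η : ℝ => 4 * π ^ 2 * (1 + L) * η + π ^ 2 / 8 - (4 / 3 - π * η) ^ 2)
      (𝓝[>] 0) (𝓝 (π ^ 2 / 8 - (4 / 3) ^ 2)) :=
    (Continuous.tendsto' (by fun_prop) _ _ (by simp)).mono_left nhdsWithin_le_nhds
  have hlim' : Tendsto (fun η : ℝ => π * η) (𝓝[>] 0) (𝓝 0) :=
    (Continuous.tendsto' (by fun_prop) _ _ (by simp)).mono_left nhdsWithin_le_nhds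
  have hneg : π ^ 2 / 8 - (4 / 3) ^ 2 < 0 := by nlinarith [pi_pos, pi_lt_d2]
  obtain ⟨η, ⟨hη, hη'⟩, hη0⟩ := (((hlim.eventually_lt_const hneg).and
    (hlim'.eventually_le_const (by norm_num : (0 : ℝ) < 4 / 3))).and self_mem_nhdsWithin).exists
  exact ⟨_, admR_softTrial hη0 L, by linarith [energy_softTrial_sub_le hη0 hL hη']⟩

end softSine

/-! ### A test function with positive residual -/

/-- A profile `g` with derivatives `g'`, `g''`, for which `g(x₁) g(x₂)` is a `C²` function on
`Γ_L` satisfying the Dirichlet condition on the walls and the Neumann condition at the ends. -/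
structure IsTestProfile (L : ℝ) (g g' g'' : ℝ → ℝ) : Prop where
  hasDerivAt : ∀ x, HasDerivAt g (g' x) x
  hasDerivAt_deriv : ∀ x, HasDerivAt g' (g'' x) x
  continuous_deriv_deriv : Continuous g''
  neg_one : g (-1) = 0
  zero : g 0 = 0
  deriv_end : g' L = 0

/-- The test function `φ(x₁, x₂) = g(x₁) g(x₂)` with profile `g`. -/
def profileProd (g : ℝ → ℝ) (p : ℝ × ℝ) : ℝ := g p.1 * g p.2

/-- The residual `-Δφ - λ₁(Γ_L) φ` of `φ = profileProd g`, where `g''` is the second derivative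
of `g`. -/
def profileResidual (L : ℝ) (g g'' : ℝ → ℝ) (p : ℝ × ℝ) : ℝ :=
  -(g'' p.1 * g p.2 + g p.1 * g'' p.2) - lamR L * (g p.1 * g p.2)

section Profile

variable {R L : ℝ} {u : ℝ × ℝ → ℝ} {g g' g'' : ℝ → ℝ}

lemma intervalIntegral_derivSnd_mul (hu : ContDiff ℝ 1 u) {h h' : ℝ → ℝ}
    (hh : ∀ y, HasDerivAt h (h' y) y) (hh' : Continuous h') {x a b : ℝ} (c : ℝ)
    (ha : u (x, a) = 0) (hb : u (x, b) * h b = 0) :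
    ∫ y in a..b, derivSnd u (x, y) * (c * h y) = ∫ y in a..b, -(u (x, y) * (c * h' y)) := by
  have hc := continuous_derivSnd hu
  have key := intervalIntegral.integral_mul_deriv_eq_deriv_mul
    (fun y _ => hasDerivAt_derivSnd (hu.differentiable one_ne_zero) x y)
    (fun y _ => (hh y).const_mul c) (Continuous.intervalIntegrable (by fun_prop) a b)
    (Continuous.intervalIntegrable (by fun_prop) a b)
  rw [intervalIntegral.integral_neg, key, ha]
  linear_combination c * hb

lemma AdmR.integral_derivSnd_mul (hu : AdmR L u) (hL : 0 < L) {f h h' : ℝ → ℝ}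
    (hf : Continuous f) (hh : ∀ y, HasDerivAt h (h' y) y) (hh' : Continuous h') (hhL : h L = 0) :
    ∫ p in GamR L, derivSnd u p * (f p.1 * h p.2) =
      ∫ p in GamR L, -(u p * (f p.1 * h' p.2)) := by
  have huc := hu.1.continuous
  have hu2 := continuous_derivSnd hu.1
  have hhc := (contDiff_one_of_hasDerivAt hh hh').continuous
  rw [integral_GamR (by fun_prop) hL.le, integral_GamR (by fun_prop) hL.le]
  congr 1
  · refine intervalIntegral.integral_congr fun x hx => ?_
    rw [uIcc_of_le neg_one_lt_zero.le] at hx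
    exact intervalIntegral_derivSnd_mul hu.1 hh hh' (f x)
      (hu.eq_zero_of_snd_eq_neg_one hL ⟨hx.1, hx.2.trans hL.le⟩) (by rw [hhL, mul_zero])
  · refine intervalIntegral.integral_congr fun x hx => ?_
    rw [uIcc_of_le hL.le] at hx
    exact intervalIntegral_derivSnd_mul hu.1 hh hh' (f x)
      (hu.eq_zero_of_snd_eq_neg_one hL ⟨by linarith [hx.1], hx.2⟩)
      (by rw [hu.eq_zero_of_snd_eq_zero hL hx, zero_mul])

lemma AdmR.integral_derivFst_mul (hu : AdmR L u) (hL : 0 < L) {f h h' : ℝ → ℝ}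
    (hf : Continuous f) (hh : ∀ y, HasDerivAt h (h' y) y) (hh' : Continuous h') (hhL : h L = 0) :
    ∫ p in GamR L, derivFst u p * (h p.1 * f p.2) =
      ∫ p in GamR L, -(u p * (h' p.1 * f p.2)) := by
  have hswap := hu.swap.integral_derivSnd_mul hL hf hh hh' hhL
  simp_rw [derivSnd_swap (hu.1.differentiable one_ne_zero)] at hswap
  rw [← integral_GamR_swap, ← integral_GamR_swap fun p => -(u p * _)]
  simpa only [Prod.fst_swap, Prod.snd_swap, mul_comm (f _)] using hswap

namespace IsTestProfile

lemma contDiff (hg : IsTestProfile L g g' g'') : ContDiff ℝ 1 g :=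
  contDiff_one_of_hasDerivAt hg.hasDerivAt
    (contDiff_one_of_hasDerivAt hg.hasDerivAt_deriv hg.continuous_deriv_deriv).continuous

lemma admR_profileProd (hg : IsTestProfile L g g' g'') (R : ℝ) : AdmR R (profileProd g) := by
  refine ⟨(hg.contDiff.comp contDiff_fst).mul (hg.contDiff.comp contDiff_snd), fun p hp => ?_⟩
  have hmin : g (min p.1 p.2) = 0 := by
    rcases (mem_DirB.1 hp).1 with h | h
    · rw [h, hg.neg_one]
    · rw [h, hg.zero]
  rcases min_choice p.1 p.2 with h | h
  · rw [profileProd, ← h, hmin, zero_mul]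
  · rw [profileProd, ← h, hmin, mul_zero]

lemma derivFst_profileProd (hg : IsTestProfile L g g' g'') (p : ℝ × ℝ) :
    derivFst (profileProd g) p = g' p.1 * g p.2 :=
  (hasDerivAt_derivFst ((hg.admR_profileProd L).1.differentiable one_ne_zero) p.1 p.2).unique
    ((hg.hasDerivAt p.1).mul_const (g p.2))

lemma derivSnd_profileProd (hg : IsTestProfile L g g' g'') (p : ℝ × ℝ) :
    derivSnd (profileProd g) p = g p.1 * g' p.2 :=
  (hasDerivAt_derivSnd ((hg.admR_profileProd L).1.differentiable one_ne_zero) p.1 p.2).unique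
    ((hg.hasDerivAt p.2).const_mul (g p.1))

lemma continuous_profileResidual (hg : IsTestProfile L g g' g'') :
    Continuous (profileResidual L g g'') := by
  have hc := hg.contDiff.continuous
  have hc'' := hg.continuous_deriv_deriv
  unfold profileResidual
  fun_prop

lemma excessForm_profileProd (hg : IsTestProfile L g g' g'') (hu : AdmR L u) (hL : 0 < L) :
    excessForm L u (profileProd g) = ∫ p in GamR L, profileResidual L g g'' p * u p := by
  have huc := hu.1.continuous
  have hu1 := continuous_derivFst hu.1
  have hu2 := continuous_derivSnd hu.1
  have hc := hg.contDiff.continuous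
  have hc'' := hg.continuous_deriv_deriv
  have hc' : Continuous g' := (contDiff_one_of_hasDerivAt hg.hasDerivAt_deriv hc'').continuous
  have hfst : IntegrableOn (fun p => derivFst u p * (g' p.1 * g p.2)) (GamR L) :=
    integrableOn_GamR (by fun_prop) L
  have hsnd : IntegrableOn (fun p => derivSnd u p * (g p.1 * g' p.2)) (GamR L) :=
    integrableOn_GamR (by fun_prop) L
  have hmass : IntegrableOn (fun p => lamR L * (u p * (g p.1 * g p.2))) (GamR L) :=
    integrableOn_GamR (by fun_prop) L
  have hfst' : IntegrableOn (fun p => -(u p * (g'' p.1 * g p.2))) (GamR L) :=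
    integrableOn_GamR (by fun_prop) L
  have hsnd' : IntegrableOn (fun p => -(u p * (g p.1 * g'' p.2))) (GamR L) :=
    integrableOn_GamR (by fun_prop) L
  simp_rw [excessForm, excessDensity, hg.derivFst_profileProd, hg.derivSnd_profileProd,
    profileProd]
  rw [integral_sub (by exact hfst.add hsnd) hmass, integral_add hfst hsnd,
    hu.integral_derivFst_mul hL hc hg.hasDerivAt_deriv hc'' hg.deriv_end,
    hu.integral_derivSnd_mul hL hc hg.hasDerivAt_deriv hc'' hg.deriv_end,
    ← integral_add hfst' hsnd',
    ← integral_sub (f := fun p => _ + _) (Integrable.add hfst' hsnd') hmass]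
  congr 1 with p
  rw [profileResidual]
  ring

end IsTestProfile

/-- On the corner `φ > 0` and `-Δφ = 2π²φ`; on the arms `φ < 0` and `-Δφ = -3π²φ`. -/
lemma profileResidual_pos (hneg : ∀ x ∈ Ioo (-1) 0, 0 < g x ∧ g'' x = -π ^ 2 * g x)
    (hpos : ∀ x ∈ Ioo 0 R, g x < 0 ∧ g'' x = 4 * π ^ 2 * g x) (hL : lamR L < π ^ 2) {p : ℝ × ℝ}
    (hp : p ∈ GamR R) (hp1 : p.1 ≠ 0) (hp2 : p.2 ≠ 0) : 0 < profileResidual L g g'' p := by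
  have hlam := lamR_nonneg L
  have harm {s t : ℝ} (hs : s ∈ Ioo (-1) 0) (ht : t ∈ Ioo 0 R) :
      0 < (3 * π ^ 2 + lamR L) * (g s * -g t) :=
    mul_pos (by positivity) (mul_pos (hneg s hs).1 (neg_pos.2 (hpos t ht).1))
  rw [mem_GamR] at hp
  obtain ⟨⟨h1, h1R⟩, ⟨h2, h2R⟩, hcorner⟩ := hp
  rw [profileResidual]
  rcases hp1.lt_or_gt with hx | hx <;> rcases hp2.lt_or_gt with hy | hy
  · have hmul := mul_pos (hneg _ ⟨h1, hx⟩).1 (hneg _ ⟨h2, hy⟩).1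
    rw [(hneg _ ⟨h1, hx⟩).2, (hneg _ ⟨h2, hy⟩).2]
    linarith [mul_pos (by linarith [sq_nonneg π] : 0 < 2 * π ^ 2 - lamR L) hmul]
  · rw [(hneg _ ⟨h1, hx⟩).2, (hpos _ ⟨hy, h2R⟩).2]
    linarith [harm ⟨h1, hx⟩ ⟨hy, h2R⟩]
  · rw [(hpos _ ⟨hx, h1R⟩).2, (hneg _ ⟨h2, hy⟩).2]
    linarith [harm ⟨h2, hy⟩ ⟨hx, h1R⟩]
  · exact absurd hcorner (by simp [hx.le, hy.le])

end Profile

lemma hasDerivAt_neg_sinh_add_cubic (R c x : ℝ) :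
    HasDerivAt (fun x => -sinh (2 * π * x) / 2 + c * max (x - R) 0 ^ 3)
      (-π * cosh (2 * π * x) + 3 * c * max (x - R) 0 ^ 2) x := by
  have hsinh : HasDerivAt (fun x => sinh (2 * π * x)) (cosh (2 * π * x) * (2 * π)) x := by
    simpa using ((hasDerivAt_id x).const_mul (2 * π)).sinh
  have hmax := (hasDerivAt_max_zero_pow 1 (x - R)).comp_sub_const x R
  refine ((hsinh.neg.div_const 2).add (hmax.const_mul c)).congr_deriv ?_
  push_cast
  ring

lemma hasDerivAt_neg_cosh_add_quadratic (R c x : ℝ) :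
    HasDerivAt (fun x => -π * cosh (2 * π * x) + 3 * c * max (x - R) 0 ^ 2)
      (-2 * π ^ 2 * sinh (2 * π * x) + 6 * c * max (x - R) 0) x := by
  have hcosh : HasDerivAt (fun x => cosh (2 * π * x)) (sinh (2 * π * x) * (2 * π)) x := by
    simpa using ((hasDerivAt_id x).const_mul (2 * π)).cosh
  have hmax := (hasDerivAt_max_zero_pow 0 (x - R)).comp_sub_const x R
  refine ((hcosh.const_mul (-π)).add (hmax.const_mul (3 * c))).congr_deriv ?_
  push_cast
  ring

lemma hasDerivAt_neg_sin_pi_mul (x : ℝ) :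
    HasDerivAt (fun x => -sin (π * x)) (-π * cos (π * x)) x := by
  refine ((hasDerivAt_id x).const_mul π).sin.neg.congr_deriv ?_
  simp only [id_eq]
  ring

lemma hasDerivAt_neg_pi_mul_cos (x : ℝ) :
    HasDerivAt (fun x => -π * cos (π * x)) (π ^ 2 * sin (π * x)) x := by
  refine ((((hasDerivAt_id x).const_mul π).cos).const_mul (-π)).congr_deriv ?_
  simp only [id_eq]
  ring

/-- The profile is `-sin (πx)` on the cross-section and `-sinh (2πx)/2` on the arm; a cubic
correction beyond `R` restores the Neumann condition at `L`. -/
lemma exists_isTestProfile {R L : ℝ} (hR : 0 < R) (hRL : R < L) :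
    ∃ g g' g'' : ℝ → ℝ, IsTestProfile L g g' g'' ∧
      (∀ x ∈ Ioo (-1) 0, 0 < g x ∧ g'' x = -π ^ 2 * g x) ∧
      ∀ x ∈ Ioo 0 R, g x < 0 ∧ g'' x = 4 * π ^ 2 * g x := by
  obtain ⟨c, hc⟩ : ∃ c, 3 * c * (L - R) ^ 2 = π * cosh (2 * π * L) :=
    ⟨π * cosh (2 * π * L) / (3 * (L - R) ^ 2), by field_simp [(sub_pos.2 hRL).ne']⟩
  have hmax {x : ℝ} (hx : x ≤ R) : max (x - R) 0 = 0 := max_eq_right (sub_nonpos.2 hx)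
  refine ⟨fun x => if x ≤ 0 then -sin (π * x) else -sinh (2 * π * x) / 2 + c * max (x - R) 0 ^ 3,
    fun x => if x ≤ 0 then -π * cos (π * x) else
      -π * cosh (2 * π * x) + 3 * c * max (x - R) 0 ^ 2,
    fun x => if x ≤ 0 then π ^ 2 * sin (π * x) else
      -2 * π ^ 2 * sinh (2 * π * x) + 6 * c * max (x - R) 0, ⟨?_, ?_, ?_, ?_, ?_, ?_⟩, ?_, ?_⟩
  · exact hasDerivAt_ite_le (fun x _ => hasDerivAt_neg_sin_pi_mul x)
      (fun x _ => hasDerivAt_neg_sinh_add_cubic R c x) (by simp [hR.le]) (by simp [hR.le])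
  · exact hasDerivAt_ite_le (fun x _ => hasDerivAt_neg_pi_mul_cos x)
      (fun x _ => hasDerivAt_neg_cosh_add_quadratic R c x) (by simp [hR.le]) (by simp [hR.le])
  · refine Continuous.if_le (by fun_prop) (by fun_prop) continuous_id continuous_const ?_
    rintro _ rfl
    simp [hR.le]
  · simp
  · simp
  · simp only [(hR.trans hRL).not_ge, if_false, max_eq_left (sub_pos.2 hRL).le]
    linear_combination hc
  · rintro x ⟨hx1, hx0⟩
    simp only [hx0.le, if_true]
    have : sin (π * x) < 0 :=
      sin_neg_of_neg_of_neg_pi_lt (by nlinarith [pi_pos]) (by nlinarith [pi_pos])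
    exact ⟨by linarith, by ring⟩
  · rintro x ⟨hx0, hxR⟩
    simp only [hx0.not_ge, if_false, hmax hxR.le]
    have : 0 < sinh (2 * π * x) := sinh_pos_iff.2 (by positivity)
    exact ⟨by linarith, by ring⟩

/-! ### Concentration of minimizing sequences -/

section Concentration

variable {R L : ℝ} {u : ℕ → ℝ × ℝ → ℝ} {f : ℝ × ℝ → ℝ}

lemma lamR_lt_sq_pi (hL : 0 ≤ L) : lamR L < π ^ 2 := by
  obtain ⟨u, hu, hlt⟩ := exists_admR_energy_lt hL
  exact hu.lamR_lt hlt

lemma exists_isMinimizingSeq_of_nonneg (hL : 0 ≤ L) : ∃ u, IsMinimizingSeq L u := by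
  obtain ⟨u, hu, hlt⟩ := exists_admR_energy_lt hL
  refine exists_isMinimizingSeq hu fun h => ?_
  rw [h, mul_zero] at hlt
  exact hlt.not_ge (energy_nonneg L u)

lemma mass_mono {v : ℝ × ℝ → ℝ} (hv : Continuous v) (hRL : R ≤ L) : mass R v ≤ mass L v :=
  integral_GamR_mono_set (hv.pow 2) (fun p => sq_nonneg (v p)) hRL

/-- Each unit of mass beyond `Γ_R` costs at least `π²`, more than the minimal energy. -/
lemma IsMinimizingSeq.tendsto_mass_one (hu : IsMinimizingSeq L u) (hR : 0 < R) (hRL : R ≤ L)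
    (hL : lamR L < π ^ 2) (hle : lamR L ≤ lamR R) :
    Tendsto (fun n => mass R (u n)) atTop (𝓝 1) := by
  have hgap : 0 < π ^ 2 - lamR L := sub_pos.2 hL
  have hbound (n : ℕ) :
      1 - (energy L (u n) - lamR L) / (π ^ 2 - lamR L) ≤ mass R (u n) := by
    have htail := (hu.adm n).sq_pi_mul_mass_sub_le (hR.trans_le hRL) hR.le hRL
    have hcore : lamR L * mass R (u n) ≤ energy R (u n) :=
      (mul_le_mul_of_nonneg_right hle (mass_nonneg R _)).trans
        ((hu.adm n).mono hRL).lamR_mul_mass_le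
    rw [hu.mass_eq_one] at htail
    rw [sub_le_comm, le_div_iff₀ hgap]
    linarith
  refine tendsto_of_tendsto_of_tendsto_of_le_of_le ?_ tendsto_const_nhds hbound fun n =>
    (mass_mono (hu.adm n).1.continuous hRL).trans_eq (hu.mass_eq_one n)
  simpa using ((hu.tendsto_energy.sub_const (lamR L)).div_const (π ^ 2 - lamR L)).const_sub 1

lemma IsMinimizingSeq.tendsto_integral_mul_sub (hu : IsMinimizingSeq L u) (hRL : R ≤ L)
    (hmass : Tendsto (fun n => mass R (u n)) atTop (𝓝 1)) (hf : Continuous f) :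
    Tendsto (fun n => (∫ p in GamR L, f p * u n p) - ∫ p in GamR R, f p * u n p)
      atTop (𝓝 0) := by
  have hmeas := (isOpen_GamR R).measurableSet
  have hdiff (F : ℝ × ℝ → ℝ) (hF : Continuous F) :
      ∫ p in GamR L \ GamR R, F p = (∫ p in GamR L, F p) - ∫ p in GamR R, F p :=
    setIntegral_sdiff hmeas (integrableOn_GamR hF L) (GamR_mono hRL)
  have hmemLp {F : ℝ × ℝ → ℝ} (hF : Continuous F) :
      MemLp F 2 (volume.restrict (GamR L \ GamR R)) :=
    (memLp_two_iff_integrable_sq hF.aestronglyMeasurable).2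
      ((integrableOn_GamR (hF.pow 2) L).mono_set sdiff_subset)
  have hbound (n : ℕ) : ((∫ p in GamR L, f p * u n p) - ∫ p in GamR R, f p * u n p) ^ 2 ≤
      (∫ p in GamR L \ GamR R, f p ^ 2) * (1 - mass R (u n)) := by
    have huc := (hu.adm n).1.continuous
    rw [← hu.mass_eq_one n, mass, mass, ← hdiff (fun p => u n p ^ 2) (huc.pow 2),
      ← hdiff (fun p => f p * u n p) (hf.mul huc)]
    exact sq_integral_mul_le (hmemLp hf) (hmemLp huc)
  refine tendsto_zero_of_sq_le hbound ?_
  simpa using (hmass.const_sub 1).const_mul (∫ p in GamR L \ GamR R, f p ^ 2)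

lemma IsMinimizingSeq.exists_integral_pow_four_le (hu : IsMinimizingSeq L u) (hR : 0 < R)
    (hRL : R ≤ L) : ∃ K, ∀ᶠ n in atTop, ∫ p in GamR R, u n p ^ 4 ≤ K := by
  refine ⟨2 * (L + 1) * (lamR L + 1) ^ 2, ?_⟩
  filter_upwards [hu.tendsto_energy.eventually_le_const (lt_add_one (lamR L))] with n hn
  have hc := (hu.adm n).1.continuous
  calc ∫ p in GamR R, u n p ^ 4
      ≤ ∫ p in GamR L, u n p ^ 4 :=
        integral_GamR_mono_set (hc.pow 4) (fun p => by positivity) hRL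
    _ ≤ 2 * (L + 1) * energy L (u n) ^ 2 := (hu.adm n).integral_pow_four_le (hR.trans_le hRL)
    _ ≤ 2 * (L + 1) * (lamR L + 1) ^ 2 := by
        have hL : 0 < L := hR.trans_le hRL
        gcongr
        exact energy_nonneg L _

lemma IsMinimizingSeq.tendsto_mass_zero (hu : IsMinimizingSeq L u) (hR : 0 < R) (hRL : R ≤ L)
    (hmass : Tendsto (fun n => mass R (u n)) atTop (𝓝 1)) (hf : Continuous f)
    (hpos : ∀ᵐ p ∂volume.restrict (GamR R), 0 < f p)
    (hlim : Tendsto (fun n => ∫ p in GamR L, f p * u n p) atTop (𝓝 0)) :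
    Tendsto (fun n => mass R (u n)) atTop (𝓝 0) := by
  have hfin : IsFiniteMeasure (volume.restrict (GamR R)) :=
    isFiniteMeasure_restrict.2 (volume_GamR_ne_top R)
  have hc (n : ℕ) := (hu.adm n).1.continuous
  obtain ⟨K, hK⟩ := hu.exists_integral_pow_four_le hR hRL
  have hlimR : Tendsto (fun n => ∫ p in GamR R, f p * u n p) atTop (𝓝 0) := by
    simpa using hlim.sub (hu.tendsto_integral_mul_sub hRL hmass hf)
  exact tendsto_integral_sq_zero hf.measurable hpos hu.nonneg
    (fun n => integrableOn_GamR ((hc n).pow 2) R) (fun n => integrableOn_GamR ((hc n).pow 4) R)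
    (fun n => integrableOn_GamR (hf.mul (hc n)) R) hK hlimR

lemma exists_ae_pos_forall_tendsto_integral_mul (hR : 0 < R) (hRL : R < L)
    (hL : lamR L < π ^ 2) :
    ∃ f : ℝ × ℝ → ℝ, Continuous f ∧ (∀ᵐ p ∂volume.restrict (GamR R), 0 < f p) ∧
      ∀ u, IsMinimizingSeq L u → Tendsto (fun n => ∫ p in GamR L, f p * u n p) atTop (𝓝 0) := by
  obtain ⟨g, g', g'', hg, hneg, hpos⟩ := exists_isTestProfile hR hRL
  refine ⟨_, hg.continuous_profileResidual, ?_, fun u hu => ?_⟩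
  · have hfst : ∀ᵐ p : ℝ × ℝ, p.1 ≠ 0 :=
      Measure.quasiMeasurePreserving_fst.ae (Measure.ae_ne volume 0)
    have hsnd : ∀ᵐ p : ℝ × ℝ, p.2 ≠ 0 :=
      Measure.quasiMeasurePreserving_snd.ae (Measure.ae_ne volume 0)
    rw [ae_restrict_iff' (isOpen_GamR R).measurableSet]
    filter_upwards [hfst, hsnd] with p h1 h2 hp using profileResidual_pos hneg hpos hL hp h1 h2
  · simp_rw [← hg.excessForm_profileProd (hu.adm _) (hR.trans hRL)]
    exact hu.tendsto_excessForm (hg.admR_profileProd L)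

end Concentration

/-- (2.14): the function `R ↦ λ₁(Γ_R)` is strictly increasing
on `(0,∞)`. -/
theorem lamR_strictMonoOn : StrictMonoOn lamR (Set.Ioi 0) := by
  intro R hR L hL hRL
  by_contra! hle
  have hlam := lamR_lt_sq_pi (le_of_lt hL)
  obtain ⟨u, hu⟩ := exists_isMinimizingSeq_of_nonneg (le_of_lt hL)
  obtain ⟨f, hf, hpos, hlim⟩ := exists_ae_pos_forall_tendsto_integral_mul hR hRL hlam
  have hone : Tendsto (fun n => mass R (u n)) atTop (𝓝 1) :=
    hu.tendsto_mass_one hR hRL.le hlam hle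
  have hzero : Tendsto (fun n => mass R (u n)) atTop (𝓝 0) :=
    hu.tendsto_mass_zero hR hRL.le hone hf hpos (hlim u hu)
  exact one_ne_zero (tendsto_nhds_unique hone hzero)
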